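/- arXiv:1504.07594 — 9 statements merged into one kernel-verified Lean document; each statement's English description precedes it below -/
import Mathlib

section
/- There is a bijection between: (1) pairs of natural transformations (δ : F ⟶ F ∘ F, ε : F ⟶ 𝟭) making (F, δ, ε) a comonad on A₁ × ⋯ × Aₙ; and (2) families of natural transformations δ^{ikj} : F_{ij} ⟶ F_{ik} ⋙ F_{kj} (for all 1 ≤ i, j, k ≤ n) and ε^i : F_{ii} ⟶ 𝟭_{A_i} (for all 1 ≤ i ≤ n) such that (a) for all i, j, k, l: (δ^{klj} whiskered with F_{ik}) ∘ δ^{ikj} = (F_{lj} whiskered with δ^{ikl}) ∘ δ^{ilj}, and (b) for all i, j: (ε^j whiskered with F_{ij}) ∘ δ^{ijj} = 𝟙_{F_{ij}} = (F_{ij} whiskered with ε^i) ∘ δ^{iij}. -/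
/-!
STATEMENT 0: Let `A₁, …, Aₙ` be preadditive categories with finite biproducts and
`F_{ij} : A_i ⥤ A_j` additive functors. Let `F` be the induced "matrix" endofunctor
of `A₁ × ⋯ × Aₙ`, with `(F X)_j = ⨁ᵢ F_{ij}(X_i)`.  There is a bijection between
(1) pairs `(δ, ε)` making `(F, δ, ε)` a comonad, and (2) families of natural
transformations `δ^{ikj} : F_{ij} ⟶ F_{ik} ⋙ F_{kj}` and `ε^i : F_{ii} ⟶ 𝟭` which
satisfy the coassociativity squares and counit triangles.
-/

open CategoryTheory Limits

universe v u

variable {n : ℕ} {A : Fin n → Type u} [∀ i, Category.{v} (A i)]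
  [∀ i, Preadditive (A i)] [∀ i, HasFiniteBiproducts (A i)]

/-- The matrix endofunctor of `A₁ × ⋯ × Aₙ` determined by the family `F i j : A i ⥤ A j`:
its `j`-th component at `X` is `⨁ᵢ (F i j).obj (X i)`. -/
noncomputable def matrixFunctor (F : ∀ i j : Fin n, A i ⥤ A j) :
    (∀ i, A i) ⥤ (∀ i, A i) where
  obj X j := ⨁ fun i => (F i j).obj (X i)
  map f j := biproduct.map fun i => (F i j).map (f i)
  map_id X := by
    funext j
    ext i
    simp
  map_comp f g := by
    funext j
    ext i
    simp

/-- Comonad structures on the matrix functor: pairs `(δ, ε)` satisfying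
coassociativity and the two counit laws. -/
noncomputable def ComonadStructures (F : ∀ i j : Fin n, A i ⥤ A j)
    [∀ i j, (F i j).Additive] : Type (max u v) :=
  { de : ((matrixFunctor F ⟶ matrixFunctor F ⋙ matrixFunctor F) ×
        (matrixFunctor F ⟶ 𝟭 (∀ i, A i))) //
    (∀ X, de.1.app X ≫ (matrixFunctor F).map (de.1.app X) =
        de.1.app X ≫ de.1.app ((matrixFunctor F).obj X)) ∧
    (∀ X, de.1.app X ≫ de.2.app ((matrixFunctor F).obj X) = 𝟙 _) ∧
    (∀ X, de.1.app X ≫ (matrixFunctor F).map (de.2.app X) = 𝟙 _) }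

/-- Matrix data: families `δ^{ikj} : F_{ij} ⟶ F_{ik} ⋙ F_{kj}` and `ε^i : F_{ii} ⟶ 𝟭`
satisfying the coassociativity squares (a) and the counit triangles (b). -/
def MatrixStructures (F : ∀ i j : Fin n, A i ⥤ A j) : Type (max u v) :=
  { de : ((∀ i k j : Fin n, F i j ⟶ F i k ⋙ F k j) × (∀ i : Fin n, F i i ⟶ 𝟭 (A i))) //
    (∀ (i j k l : Fin n) (X : A i),
      (de.1 i k j).app X ≫ (de.1 k l j).app ((F i k).obj X) =
        (de.1 i l j).app X ≫ (F l j).map ((de.1 i k l).app X)) ∧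
    (∀ (i j : Fin n) (X : A i),
      (de.1 i j j).app X ≫ (de.2 j).app ((F i j).obj X) = 𝟙 ((F i j).obj X)) ∧
    (∀ (i j : Fin n) (X : A i),
      (de.1 i i j).app X ≫ (F i j).map ((de.2 i).app X) = 𝟙 ((F i j).obj X)) }

/-!
A transformation `eval j ⋙ G ⟶ eval i ⋙ H` with `j ≠ i` vanishes, by naturality along the
endomorphism which is zero in the `i`-th coordinate and the identity elsewhere, while for `j = i` it
is induced by a unique `G ⟶ H`, since `eval i` is full and essentially surjective. Hence
transformations out of `⨁ⱼ Gⱼ(Xⱼ)` into `H(Xᵢ)` are the same as transformations `Gᵢ ⟶ H`. As the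
`F k j` preserve biproducts, `F (F X)` in coordinate `j` is the product of the `F_{kj}(F_{ik}(Xᵢ))`,
so `δ` and `ε` amount to families `δ^{ikj}` and `ε^i`. Composing a comonad law with the projections
of its target gives the corresponding matrix law precomposed with a projection `F X ⟶ F_{ij}(Xᵢ)`,
which is epi.
-/

section WhiskeringLeft

variable {C D E : Type*} [Category* C] [Category* D] [Category* E]

theorem naturality_of_full {L : C ⥤ D} [L.Full] {G H : D ⥤ E} (τ : L ⋙ G ⟶ L ⋙ H) {X Y : C}
    (f : L.obj X ⟶ L.obj Y) :
    G.map f ≫ τ.app Y = τ.app X ≫ H.map f := by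
  simpa using τ.naturality (L.preimage f)

/-- Precomposition with a full and essentially surjective functor is fully faithful. -/
noncomputable def whiskeringLeftFullyFaithful (L : C ⥤ D) [L.Full] [L.EssSurj] :
    ((Functor.whiskeringLeft C D E).obj L).FullyFaithful where
  preimage {G H} τ :=
    { app Y := G.map (L.objObjPreimageIso Y).inv ≫ τ.app (L.objPreimage Y) ≫
        H.map (L.objObjPreimageIso Y).hom
      naturality Y Y' f := by
        have transported := naturality_of_full τ
          ((L.objObjPreimageIso Y).hom ≫ f ≫ (L.objObjPreimageIso Y').inv)
        rw [← cancel_epi (G.map (L.objObjPreimageIso Y).hom)]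
        simpa [← Functor.map_comp_assoc, ← Functor.map_comp] using
          transported =≫ H.map (L.objObjPreimageIso Y').hom }
  map_preimage {G H} τ := by
    ext X
    simp [← naturality_of_full τ, ← Functor.map_comp_assoc]
  preimage_map {G H} σ := by
    ext Y
    simp

end WhiskeringLeft

/-- Transformations into a pointwise product of functors correspond to families of transformations
into the factors. -/
def natTransEquivOfIsLimit {J D E : Type*} [Category* D] [Category* E] {T P : D ⥤ E}
    {Q : J → D ⥤ E} (p : ∀ i, P ⟶ Q i)
    (hp : ∀ X, IsLimit (Fan.mk (P.obj X) fun i => (p i).app X)) :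
    (T ⟶ P) ≃ ∀ i, T ⟶ Q i where
  toFun α i := α ≫ p i
  invFun τ :=
    { app X := Fan.IsLimit.lift (hp X) fun i => (τ i).app X
      naturality X Y f := by
        refine Fan.IsLimit.hom_ext (hp Y) _ _ fun i => ?_
        have lift_p (X : D) : Fan.IsLimit.lift (hp X) (fun i => (τ i).app X) ≫ (p i).app X =
          (τ i).app X := Fan.IsLimit.fac (hp X) _ i
        simp [lift_p, reassoc_of% lift_p] }
  left_inv α := by
    ext X
    exact Fan.IsLimit.hom_ext (hp X) _ _ fun i => Fan.IsLimit.fac (hp X) _ i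
  right_inv τ := by
    ext i X
    exact Fan.IsLimit.fac (hp X) _ i

section Eval

variable {ι : Type*} {B : ι → Type*} [∀ i, Category* (B i)]

/-- A transformation between functors into a product category is a family of transformations
between their coordinates. -/
def natTransPiEquiv {D : Type*} [Category* D] (S T : D ⥤ ∀ i, B i) :
    (S ⟶ T) ≃ ∀ i, S ⋙ Pi.eval B i ⟶ T ⋙ Pi.eval B i where
  toFun α i := Functor.whiskerRight α (Pi.eval B i)
  invFun τ := NatTrans.pi' τ
  left_inv _ := rfl
  right_inv _ := rfl

instance [∀ i, Nonempty (B i)] (i : ι) : (Pi.eval B i).EssSurj where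
  mem_essImage Y :=
    have ⟨X, hX⟩ := Function.surjective_eval i Y
    ⟨X, ⟨eqToIso hX⟩⟩

variable [∀ i, HasZeroMorphisms (B i)]

instance (i : ι) : (Pi.eval B i).Full where
  map_surjective {X Y} f := by
    classical
    let extendByZero : X ⟶ Y := Function.update (fun l => (0 : X l ⟶ Y l)) i f
    have extendByZero_self : extendByZero i = f := Function.update_self ..
    exact ⟨extendByZero, extendByZero_self⟩

theorem natTrans_eval_eq_zero {C : Type*} [Category* C] [HasZeroMorphisms C] {i j : ι}
    (hji : j ≠ i) {G : B j ⥤ C} {H : B i ⥤ C} [H.PreservesZeroMorphisms]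
    (τ : Pi.eval B j ⋙ G ⟶ Pi.eval B i ⋙ H) : τ = 0 := by
  classical
  ext X
  let killCoord : X ⟶ X := Function.update (fun l => 𝟙 (X l)) i 0
  have killCoord_self : killCoord i = 0 := Function.update_self ..
  have killCoord_ne : killCoord j = 𝟙 (X j) := Function.update_of_ne hji ..
  have map_self : (Pi.eval B i ⋙ H).map killCoord = 0 :=
    (congrArg H.map killCoord_self).trans (H.map_zero _ _)
  have map_ne : (Pi.eval B j ⋙ G).map killCoord = 𝟙 _ :=
    (congrArg G.map killCoord_ne).trans (G.map_id _)
  simpa only [map_self, map_ne, Category.id_comp, comp_zero] using! τ.naturality killCoord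

end Eval

/-- The functor `X ↦ ⨁ᵢ Gᵢ(Xᵢ)` on a finite product of categories. -/
noncomputable def biproductFunctor {J C : Type*} {B : J → Type*} [Finite J]
    [∀ i, Category* (B i)] [Category* C] [HasZeroMorphisms C] [HasFiniteBiproducts C]
    (G : ∀ i, B i ⥤ C) : (∀ i, B i) ⥤ C where
  obj X := ⨁ fun i => (G i).obj (X i)
  map f := biproduct.map fun i => (G i).map (f i)

namespace biproductFunctor

variable {J C : Type*} {B : J → Type*} [Finite J] [∀ i, Category* (B i)] [Category* C]
  [HasZeroMorphisms C] [HasFiniteBiproducts C] (G : ∀ i, B i ⥤ C)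

/-- The projections of `biproductFunctor` onto its summands. -/
noncomputable def π (i : J) : biproductFunctor G ⟶ Pi.eval B i ⋙ G i where
  app X := biproduct.π (fun i => (G i).obj (X i)) i
  naturality _ _ f := biproduct.map_π (fun i => (G i).map (f i)) i

/-- The inclusions of the summands of `biproductFunctor`. -/
noncomputable def ι (i : J) : Pi.eval B i ⋙ G i ⟶ biproductFunctor G where
  app X := biproduct.ι (fun i => (G i).obj (X i)) i
  naturality _ _ f := (biproduct.ι_map (fun i => (G i).map (f i)) i).symm

theorem ι_π (i : J) : ι G i ≫ π G i = 𝟙 _ := by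
  ext X
  exact biproduct.ι_π_self _ i

instance (i : J) (X : ∀ i, B i) : Epi ((π G i).app X) :=
  inferInstanceAs (Epi (biproduct.π (fun i => (G i).obj (X i)) i))

variable {G}

theorem natTrans_ext {T : (∀ i, B i) ⥤ C} {α β : biproductFunctor G ⟶ T}
    (h : ∀ i, ι G i ≫ α = ι G i ≫ β) : α = β := by
  ext X
  exact biproduct.hom_ext' _ _ fun i => congrArg (fun τ => τ.app X) (h i)

theorem π_ι_comp [∀ i, HasZeroMorphisms (B i)] {i : J} {H : B i ⥤ C}
    [H.PreservesZeroMorphisms] (α : biproductFunctor G ⟶ Pi.eval B i ⋙ H) :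
    π G i ≫ ι G i ≫ α = α := by
  refine natTrans_ext fun j => ?_
  by_cases hji : j = i
  · subst hji
    rw [reassoc_of% ι_π G j]
  · rw [natTrans_eval_eq_zero hji (ι G j ≫ α),
      natTrans_eval_eq_zero hji (ι G j ≫ π G i ≫ ι G i ≫ α)]

/-- Transformations `⨁ⱼ Gⱼ(Xⱼ) ⟶ H(Xᵢ)` correspond to transformations `Gᵢ ⟶ H`. -/
noncomputable def natTransToEvalEquiv [∀ i, HasZeroMorphisms (B i)] [∀ i, Nonempty (B i)]
    (i : J) (H : B i ⥤ C) [H.PreservesZeroMorphisms] :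
    (biproductFunctor G ⟶ Pi.eval B i ⋙ H) ≃ (G i ⟶ H) :=
  Equiv.trans
    { toFun α := ι G i ≫ α
      invFun τ := π G i ≫ τ
      left_inv := π_ι_comp
      right_inv τ := (reassoc_of% ι_π G i) τ }
    (whiskeringLeftFullyFaithful (Pi.eval B i)).homEquiv.symm

theorem π_comp_natTransToEvalEquiv [∀ i, HasZeroMorphisms (B i)] [∀ i, Nonempty (B i)]
    {i : J} {H : B i ⥤ C} [H.PreservesZeroMorphisms] (α : biproductFunctor G ⟶ Pi.eval B i ⋙ H)
    (X : ∀ i, B i) :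
    (π G i).app X ≫ (natTransToEvalEquiv i H α).app (X i) = α.app X :=
  congrArg (fun τ => τ.app X) ((natTransToEvalEquiv i H).symm_apply_apply α)

/-- A functor preserving biproducts exhibits `K (⨁ᵢ Gᵢ(Xᵢ))` as the product of the `K (Gᵢ(Xᵢ))`. -/
noncomputable def isLimitFanMap {E : Type*} [Category* E] [HasZeroMorphisms E] (K : C ⥤ E)
    [K.PreservesZeroMorphisms] [PreservesBiproductsOfShape J K] (X : ∀ i, B i) :
    IsLimit (Fan.mk (K.obj ((biproductFunctor G).obj X)) fun i => K.map ((π G i).app X)) :=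
  (isBilimitOfPreserves K (biproduct.isBilimit _)).isLimit

/-- Transformations into `K (⨁ᵢ Gᵢ(Sᵢ))` correspond to families of transformations into the
`K (Gᵢ(Sᵢ))`, for `K` preserving biproducts. -/
noncomputable def natTransCompEquiv {D E : Type*} [Category* D] [Category* E] [HasZeroMorphisms E]
    (T : D ⥤ E) (S : D ⥤ ∀ i, B i) (K : C ⥤ E)
    [K.PreservesZeroMorphisms] [PreservesBiproductsOfShape J K] :
    (T ⟶ S ⋙ biproductFunctor G ⋙ K) ≃ ∀ i, T ⟶ S ⋙ Pi.eval B i ⋙ G i ⋙ K :=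
  natTransEquivOfIsLimit (fun i => Functor.whiskerLeft S (Functor.whiskerRight (π G i) K))
    fun X => isLimitFanMap K (S.obj X)

end biproductFunctor

namespace matrixFunctor

open scoped ZeroObject

variable (F : ∀ i j : Fin n, A i ⥤ A j)

/-- The projection `(F X)_j ⟶ F_{ij}(X_i)`. -/
noncomputable def proj (X : ∀ i, A i) (i j : Fin n) :
    (matrixFunctor F).obj X j ⟶ (F i j).obj (X i) :=
  (biproductFunctor.π (fun i => F i j) i).app X

instance (X : ∀ i, A i) (i j : Fin n) : Epi (proj F X i j) :=
  inferInstanceAs (Epi ((biproductFunctor.π (fun i => F i j) i).app X))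

theorem map_proj {X Y : ∀ i, A i} (f : X ⟶ Y) (i j : Fin n) :
    (matrixFunctor F).map f j ≫ proj F Y i j = proj F X i j ≫ (F i j).map (f i) :=
  (biproductFunctor.π (fun i => F i j) i).naturality f

variable {F} in
theorem hom_ext {X : ∀ i, A i} {j : Fin n} {Z : A j} {f g : Z ⟶ (matrixFunctor F).obj X j}
    (h : ∀ i, f ≫ proj F X i j = g ≫ proj F X i j) : f = g :=
  biproduct.hom_ext _ _ h

variable {F} in
theorem map_hom_ext {C : Type*} [Category* C] [Preadditive C] {j : Fin n} (K : A j ⥤ C)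
    [K.Additive] {X : ∀ i, A i} {Z : C} {f g : Z ⟶ K.obj ((matrixFunctor F).obj X j)}
    (h : ∀ i, f ≫ K.map (proj F X i j) = g ≫ K.map (proj F X i j)) : f = g :=
  Fan.IsLimit.hom_ext (biproductFunctor.isLimitFanMap K X) _ _ h

/-- The family `ε^i` determined by a transformation `ε : F ⟶ 𝟭`. -/
noncomputable def counitEquiv : (matrixFunctor F ⟶ 𝟭 (∀ i, A i)) ≃ ∀ i, F i i ⟶ 𝟭 (A i) :=
  calc (matrixFunctor F ⟶ 𝟭 (∀ i, A i))
    _ ≃ ∀ i, biproductFunctor (fun k => F k i) ⟶ Pi.eval A i ⋙ 𝟭 (A i) := natTransPiEquiv _ _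
    _ ≃ ∀ i, F i i ⟶ 𝟭 (A i) :=
        Equiv.piCongrRight fun i => biproductFunctor.natTransToEvalEquiv i (𝟭 (A i))

variable {F} in
theorem counit_eq (ε : matrixFunctor F ⟶ 𝟭 (∀ i, A i)) (X : ∀ i, A i) (i : Fin n) :
    ε.app X i = proj F X i i ≫ (counitEquiv F ε i).app (X i) :=
  (biproductFunctor.π_comp_natTransToEvalEquiv (G := fun k => F k i) (H := 𝟭 (A i))
    (natTransPiEquiv _ _ ε i) X).symm

variable [∀ i j, (F i j).Additive]

variable {F} in
theorem hom_ext₃ {X : ∀ i, A i} {j : Fin n} {Z : A j}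
    {f g : Z ⟶ (matrixFunctor F).obj ((matrixFunctor F).obj ((matrixFunctor F).obj X)) j}
    (h : ∀ l k i,
      f ≫ proj F ((matrixFunctor F).obj ((matrixFunctor F).obj X)) l j ≫
          (F l j).map (proj F ((matrixFunctor F).obj X) k l ≫ (F k l).map (proj F X i k)) =
        g ≫ proj F ((matrixFunctor F).obj ((matrixFunctor F).obj X)) l j ≫
          (F l j).map (proj F ((matrixFunctor F).obj X) k l ≫ (F k l).map (proj F X i k))) :
    f = g := by
  refine hom_ext fun l => map_hom_ext (F l j) fun k => map_hom_ext (F k l ⋙ F l j) fun i => ?_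
  simpa using h l k i

/-- The family `δ^{ikj}` determined by a transformation `δ : F ⟶ F ⋙ F`. -/
noncomputable def comultEquiv : (matrixFunctor F ⟶ matrixFunctor F ⋙ matrixFunctor F) ≃
    ∀ i k j, F i j ⟶ F i k ⋙ F k j :=
  calc (matrixFunctor F ⟶ matrixFunctor F ⋙ matrixFunctor F)
    _ ≃ ∀ j, biproductFunctor (fun i => F i j) ⟶
          matrixFunctor F ⋙ biproductFunctor (fun k => F k j) ⋙ 𝟭 _ := natTransPiEquiv _ _
    _ ≃ ∀ j k, biproductFunctor (fun i => F i j) ⟶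
          𝟭 _ ⋙ biproductFunctor (fun i => F i k) ⋙ F k j :=
        Equiv.piCongrRight fun _ => biproductFunctor.natTransCompEquiv _ _ _
    _ ≃ ∀ j k i, biproductFunctor (fun i => F i j) ⟶ Pi.eval A i ⋙ F i k ⋙ F k j :=
        Equiv.piCongrRight fun _ => Equiv.piCongrRight fun _ =>
          biproductFunctor.natTransCompEquiv _ _ _
    _ ≃ ∀ j k i, F i j ⟶ F i k ⋙ F k j :=
        Equiv.piCongrRight fun j => Equiv.piCongrRight fun k => Equiv.piCongrRight fun i =>
          biproductFunctor.natTransToEvalEquiv i (F i k ⋙ F k j)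
    _ ≃ ∀ i k j, F i j ⟶ F i k ⋙ F k j :=
        ⟨fun d i k j => d j k i, fun d j k i => d i k j, fun _ => rfl, fun _ => rfl⟩

variable {F}
variable (δ : matrixFunctor F ⟶ matrixFunctor F ⋙ matrixFunctor F)
  (ε : matrixFunctor F ⟶ 𝟭 (∀ i, A i))

theorem comult_proj (X : ∀ i, A i) (i k j : Fin n) :
    δ.app X j ≫ proj F ((matrixFunctor F).obj X) k j ≫ (F k j).map (proj F X i k) =
      proj F X i j ≫ (comultEquiv F δ i k j).app (X i) := by
  let entry : biproductFunctor (fun i => F i j) ⟶ Pi.eval A i ⋙ F i k ⋙ F k j :=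
    (natTransPiEquiv _ _ δ j ≫
        Functor.whiskerLeft (matrixFunctor F) (biproductFunctor.π (fun k => F k j) k)) ≫
      Functor.whiskerRight (biproductFunctor.π (fun i => F i k) i) (F k j)
  exact (Category.assoc _ _ _).symm.trans
    (biproductFunctor.π_comp_natTransToEvalEquiv entry X).symm

theorem comult_map_comult_proj (X : ∀ i, A i) (i j k l : Fin n) :
    (δ.app X ≫ (matrixFunctor F).map (δ.app X)) j ≫
        proj F ((matrixFunctor F).obj ((matrixFunctor F).obj X)) l j ≫
        (F l j).map (proj F ((matrixFunctor F).obj X) k l ≫ (F k l).map (proj F X i k)) =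
      proj F X i j ≫ (comultEquiv F δ i l j).app (X i) ≫
        (F l j).map ((comultEquiv F δ i k l).app (X i)) := by
  have map_δ_proj := map_proj F (δ.app X) l j
  rw [Pi.comp_apply, Category.assoc, reassoc_of% map_δ_proj, ← Functor.map_comp, comult_proj,
    Functor.map_comp, reassoc_of% comult_proj δ X i l j]

theorem comult_comult_proj (X : ∀ i, A i) (i j k l : Fin n) :
    (δ.app X ≫ δ.app ((matrixFunctor F).obj X)) j ≫
        proj F ((matrixFunctor F).obj ((matrixFunctor F).obj X)) l j ≫
        (F l j).map (proj F ((matrixFunctor F).obj X) k l ≫ (F k l).map (proj F X i k)) =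
      proj F X i j ≫ (comultEquiv F δ i k j).app (X i) ≫
        (comultEquiv F δ k l j).app ((F i k).obj (X i)) := by
  have outer_δ_proj := comult_proj δ ((matrixFunctor F).obj X) k l j
  have entry_naturality := (comultEquiv F δ k l j).naturality (proj F X i k)
  rw [Pi.comp_apply, Category.assoc, Functor.map_comp, reassoc_of% outer_δ_proj,
    ← Functor.comp_map, ← entry_naturality, reassoc_of% comult_proj δ X i k j]

theorem comult_counit_proj (X : ∀ i, A i) (i j : Fin n) :
    (δ.app X ≫ ε.app ((matrixFunctor F).obj X)) j ≫ proj F X i j =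
      proj F X i j ≫ (comultEquiv F δ i j j).app (X i) ≫
        (counitEquiv F ε j).app ((F i j).obj (X i)) := by
  have entry_naturality : (counitEquiv F ε j).app ((matrixFunctor F).obj X j) ≫ proj F X i j =
      (F j j).map (proj F X i j) ≫ (counitEquiv F ε j).app ((F i j).obj (X i)) :=
    ((counitEquiv F ε j).naturality (proj F X i j)).symm
  have outer_ε := counit_eq ε ((matrixFunctor F).obj X) j
  calc (δ.app X ≫ ε.app ((matrixFunctor F).obj X)) j ≫ proj F X i j
    _ = (δ.app X j ≫ proj F ((matrixFunctor F).obj X) j j ≫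
          (counitEquiv F ε j).app ((matrixFunctor F).obj X j)) ≫ proj F X i j := by
        rw [Pi.comp_apply, outer_ε]
    _ = _ := by
        simp only [Category.assoc]
        rw [entry_naturality, reassoc_of% comult_proj δ X i j j]

theorem comult_map_counit_proj (X : ∀ i, A i) (i j : Fin n) :
    (δ.app X ≫ (matrixFunctor F).map (ε.app X)) j ≫ proj F X i j =
      proj F X i j ≫ (comultEquiv F δ i i j).app (X i) ≫
        (F i j).map ((counitEquiv F ε i).app (X i)) := by
  have map_ε_proj := map_proj F (Y := X) (ε.app X) i j
  rw [Pi.comp_apply, Category.assoc, map_ε_proj, counit_eq, Functor.map_comp,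
    reassoc_of% comult_proj δ X i i j]

theorem coassoc_iff :
    (∀ X, δ.app X ≫ (matrixFunctor F).map (δ.app X) =
        δ.app X ≫ δ.app ((matrixFunctor F).obj X)) ↔
    ∀ (i j k l : Fin n) (X : A i),
      (comultEquiv F δ i k j).app X ≫ (comultEquiv F δ k l j).app ((F i k).obj X) =
        (comultEquiv F δ i l j).app X ≫ (F l j).map ((comultEquiv F δ i k l).app X) := by
  constructor
  · intro h i j k l Y
    obtain ⟨X, rfl⟩ := Function.surjective_eval i Y
    rw [← cancel_epi (proj F X i j), ← comult_comult_proj, ← h X]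
    exact comult_map_comult_proj δ X i j k l
  · intro h X
    funext j
    refine hom_ext₃ fun l k i => ?_
    rw [comult_map_comult_proj, ← h]
    exact (comult_comult_proj δ X i j k l).symm

theorem counit_left_iff :
    (∀ X, δ.app X ≫ ε.app ((matrixFunctor F).obj X) = 𝟙 _) ↔
    ∀ (i j : Fin n) (X : A i),
      (comultEquiv F δ i j j).app X ≫ (counitEquiv F ε j).app ((F i j).obj X) =
        𝟙 ((F i j).obj X) := by
  constructor
  · intro h i j Y
    obtain ⟨X, rfl⟩ := Function.surjective_eval i Y
    rw [← cancel_epi (proj F X i j), ← comult_counit_proj, h X, Pi.id_apply, Category.id_comp,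
      Category.comp_id]
  · intro h X
    funext j
    refine hom_ext fun i => ?_
    rw [comult_counit_proj, h, Pi.id_apply, Category.id_comp, Category.comp_id]

theorem counit_right_iff :
    (∀ X, δ.app X ≫ (matrixFunctor F).map (ε.app X) = 𝟙 _) ↔
    ∀ (i j : Fin n) (X : A i),
      (comultEquiv F δ i i j).app X ≫ (F i j).map ((counitEquiv F ε i).app X) =
        𝟙 ((F i j).obj X) := by
  constructor
  · intro h i j Y
    obtain ⟨X, rfl⟩ := Function.surjective_eval i Y
    rw [← cancel_epi (proj F X i j), ← comult_map_counit_proj, h X, Pi.id_apply, Category.id_comp,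
      Category.comp_id]
  · intro h X
    funext j
    refine hom_ext (X := X) fun i => ?_
    rw [comult_map_counit_proj, h, Pi.id_apply, Category.id_comp, Category.comp_id]

end matrixFunctor

theorem stmt_0 (F : ∀ i j : Fin n, A i ⥤ A j) [∀ i j, (F i j).Additive] :
    Nonempty (ComonadStructures F ≃ MatrixStructures F) := by
  let entriesEquiv := (matrixFunctor.comultEquiv F).prodCongr (matrixFunctor.counitEquiv F)
  exact ⟨entriesEquiv.subtypeEquiv fun (δ, ε) =>
    and_congr (matrixFunctor.coassoc_iff δ)
      (and_congr (matrixFunctor.counit_left_iff δ ε) (matrixFunctor.counit_right_iff δ ε))⟩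
end

section
/- The category X whose objects are tuples ((C, d_C) ∈ C_R, (D, d_D) ∈ D_S, f : D ⟶ V(C)) satisfying ρ_C ∘ f = V(d_C) ∘ f and λ_C ∘ f = S(f) ∘ d_D, and whose morphisms are pairs of comodule morphisms (g : (C,d_C) ⟶ (C',d_{C'}), h : (D,d_D) ⟶ (D',d_{D'})) with f' ∘ h = V(g) ∘ f (this is the category of comodules over the triangular matrix comonad with diagonal entries R, S and lower-left entry V on C × D), is equivalent to the comma category Comma(𝟭_{D_S}, T), whose objects are triples ((C,d_C) ∈ C_R, (D,d_D) ∈ D_S, g : (D,d_D) ⟶ T(C,d_C)). -/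
/-!
STATEMENT 2: With `R`, `S`, `V`, `ρ`, `λ` as in the triangular matrix comonad
situation, and `T : C_R ⥤ D_S` the functor built from the equalizers, the category of
comodules over the triangular matrix comonad `[[R, 0], [V, S]]` — whose objects are
triples `((C,d_C), (D,d_D), f : D ⟶ V C)` with `f ≫ ρ_C = f ≫ V(d_C)` and
`f ≫ λ_C = d_D ≫ S(f)`, and whose morphisms are pairs of comodule morphisms
compatible with `f` — is equivalent to the comma category `Comma(𝟭_{D_S}, T)`.
-/

open CategoryTheory Limits

universe v₁ v₂ u₁ u₂

variable {C : Type u₁} [Category.{v₁} C] {D : Type u₂} [Category.{v₂} D]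
variable (R : Comonad C) (S : Comonad D) (V : C ⥤ D)
variable (ρ : V ⟶ (R : C ⥤ C) ⋙ V) (lam : V ⟶ V ⋙ (S : D ⥤ D))

/-- An object of the category of comodules over the triangular matrix comonad
`[[R, 0], [V, S]]`: an `R`-comodule `(C, d_C)`, an `S`-comodule `(D, d_D)` and a
morphism `f : D ⟶ V(C)` such that `f ≫ ρ_C = f ≫ V(d_C)` and `f ≫ λ_C = d_D ≫ S(f)`. -/
structure TriangularComodule where
  c : R.Coalgebra
  d : S.Coalgebra
  f : d.A ⟶ V.obj c.A
  compat_ρ : f ≫ ρ.app c.A = f ≫ V.map c.a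
  compat_lam : f ≫ lam.app c.A = d.a ≫ (S : D ⥤ D).map f

/-- A morphism of comodules over the triangular matrix comonad: a pair of comodule
morphisms compatible with the connecting morphisms. -/
@[ext]
structure TriangularComoduleHom (M N : TriangularComodule R S V ρ lam) where
  g : M.c ⟶ N.c
  h : M.d ⟶ N.d
  compat : h.f ≫ N.f = M.f ≫ V.map g.f

instance : Category (TriangularComodule R S V ρ lam) where
  Hom M N := TriangularComoduleHom R S V ρ lam M N
  id M := ⟨𝟙 M.c, 𝟙 M.d, by simp⟩
  comp f g := ⟨f.g ≫ g.g, f.h ≫ g.h, by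
    simp only [Comonad.Coalgebra.comp_f, Category.assoc, Functor.map_comp]
    rw [g.compat, ← Category.assoc, f.compat, Category.assoc]⟩
  id_comp f := by apply TriangularComoduleHom.ext <;> simp
  comp_id f := by apply TriangularComoduleHom.ext <;> simp
  assoc f g h := by apply TriangularComoduleHom.ext <;> simp

/-!
A comodule morphism `D ⟶ T(C)` is the same as a morphism `f : D ⟶ V(C)` with
`f ≫ ρ_C = f ≫ V(d_C)` and `f ≫ λ_C = d_D ≫ S(f)`. The first condition says that `f` factors
through the equalizer `T(C)`. The second one says that this factorization is a comodule morphism,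
which may be tested after composing with the image under `S` of the equalizer inclusion, because
that image is a monomorphism.
-/

theorem mono_map_of_isLimit_fork (G : C ⥤ D) {W X Y : C} {f g : X ⟶ Y} {ι : W ⟶ X}
    {w : ι ≫ f = ι ≫ g} (hι : IsLimit (Fork.ofι ι w)) [PreservesLimit (parallelPair f g) G] :
    Mono (G.map ι) :=
  mono_of_isLimit_fork (isLimitForkMapOfIsLimit G w hι)

section Cotensor

variable {R S V ρ lam}

/-- Isomorphisms of comodules over the triangular matrix comonad, built from isomorphisms of the
underlying `R`- and `S`-comodules. -/
def TriangularComodule.isoMk {M N : TriangularComodule R S V ρ lam} (g : M.c ≅ N.c)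
    (h : M.d ≅ N.d) (w : h.hom.f ≫ N.f = M.f ≫ V.map g.hom.f) : M ≅ N where
  hom := ⟨g.hom, h.hom, w⟩
  inv := ⟨g.inv, h.inv, by
    have h_inv_hom : h.inv.f ≫ h.hom.f = 𝟙 N.d.A :=
      congrArg Comonad.Coalgebra.Hom.f h.inv_hom_id
    have g_hom_inv : g.hom.f ≫ g.inv.f = 𝟙 M.c.A :=
      congrArg Comonad.Coalgebra.Hom.f g.hom_inv_id
    calc h.inv.f ≫ M.f
        = h.inv.f ≫ (M.f ≫ V.map g.hom.f) ≫ V.map g.inv.f := by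
          rw [Category.assoc, ← V.map_comp, g_hom_inv, V.map_id, Category.comp_id]
      _ = N.f ≫ V.map g.inv.f := by
          rw [← w, Category.assoc, reassoc_of% h_inv_hom]⟩
  hom_inv_id := TriangularComoduleHom.ext g.hom_inv_id h.hom_inv_id
  inv_hom_id := TriangularComoduleHom.ext g.inv_hom_id h.inv_hom_id

variable (ρ lam) in
/-- A natural family of morphisms `T(C) ⟶ V(C)` equalizing `ρ_C` and `V(d_C)` and intertwining the
coaction of `T(C)` with `λ_C`. When every one of these forks is an equalizer, `T` is the cotensor
product functor of `V` over `R`; universality is kept out of the structure. -/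
structure CotensorCone (T : R.Coalgebra ⥤ S.Coalgebra) where
  ι (X : R.Coalgebra) : (T.obj X).A ⟶ V.obj X.A
  naturality {X Y : R.Coalgebra} (g : X ⟶ Y) : (T.map g).f ≫ ι Y = ι X ≫ V.map g.f
  condition (X : R.Coalgebra) : ι X ≫ ρ.app X.A = ι X ≫ V.map X.a
  coaction (X : R.Coalgebra) : (T.obj X).a ≫ (S : D ⥤ D).map (ι X) = ι X ≫ lam.app X.A

namespace CotensorCone

variable {T : R.Coalgebra ⥤ S.Coalgebra} (K : CotensorCone ρ lam T)

/-- The component of a cotensor cone at `X`, as a fork on `ρ_X` and `V(d_X)`. -/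
abbrev fork (X : R.Coalgebra) : Fork (ρ.app X.A) (V.map X.a) :=
  Fork.ofι (K.ι X) (K.condition X)

theorem comp_map_f_comp_ι {X X' : R.Coalgebra} {Y : S.Coalgebra} (k : Y ⟶ T.obj X) (g : X ⟶ X') :
    (k ≫ T.map g).f ≫ K.ι X' = (k.f ≫ K.ι X) ≫ V.map g.f := by
  rw [Comonad.Coalgebra.comp_f, Category.assoc, K.naturality, Category.assoc]

section Square

variable {X X' : R.Coalgebra} {Y Y' : S.Coalgebra} {k : Y ⟶ T.obj X} {k' : Y' ⟶ T.obj X'}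
  {g : X ⟶ X'} {h : Y ⟶ Y'}

theorem comp_ι_comm_of_comm (w : h ≫ k' = k ≫ T.map g) :
    h.f ≫ k'.f ≫ K.ι X' = (k.f ≫ K.ι X) ≫ V.map g.f := by
  rw [← K.comp_map_f_comp_ι, ← w, Comonad.Coalgebra.comp_f, Category.assoc]

theorem comm_of_comp_ι_comm [Mono (K.ι X')]
    (w : h.f ≫ k'.f ≫ K.ι X' = (k.f ≫ K.ι X) ≫ V.map g.f) : h ≫ k' = k ≫ T.map g := by
  apply Comonad.Coalgebra.Hom.ext
  rw [← cancel_mono (K.ι X'), K.comp_map_f_comp_ι, Comonad.Coalgebra.comp_f, Category.assoc, w]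

end Square

/-- The triangular comodule whose connecting morphism is the composite of a comodule morphism
`Y ⟶ T(X)` with `T(X) ⟶ V(X)`. -/
def triangularComodule {X : R.Coalgebra} {Y : S.Coalgebra} (k : Y ⟶ T.obj X) :
    TriangularComodule R S V ρ lam where
  c := X
  d := Y
  f := k.f ≫ K.ι X
  compat_ρ := by rw [Category.assoc, K.condition, Category.assoc]
  compat_lam := by rw [Category.assoc, ← K.coaction, ← k.h_assoc, Functor.map_comp]

/-- The comparison functor from the comma category to comodules over the triangular matrix
comonad, given by composition with `T(X) ⟶ V(X)`. -/
def toTriangularComodule : Comma (𝟭 S.Coalgebra) T ⥤ TriangularComodule R S V ρ lam where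
  obj X := K.triangularComodule X.hom
  map m := ⟨m.right, m.left, K.comp_ι_comm_of_comm m.w⟩

instance toTriangularComodule_faithful : K.toTriangularComodule.Faithful where
  map_injective eq :=
    CommaMorphism.ext (congrArg TriangularComoduleHom.h eq) (congrArg TriangularComoduleHom.g eq)

instance toTriangularComodule_full [∀ X, Mono (K.ι X)] : K.toTriangularComodule.Full where
  map_surjective m := ⟨⟨m.h, m.g, K.comm_of_comp_ι_comm m.compat⟩, rfl⟩

variable {K}

/-- The factorization of the connecting morphism of a triangular comodule through `T(C)`, as a
morphism of `S`-comodules. -/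
def lift (M : TriangularComodule R S V ρ lam) (hK : IsLimit (K.fork M.c))
    [Mono ((S : D ⥤ D).map (K.ι M.c))] : M.d ⟶ T.obj M.c where
  f := Fork.IsLimit.lift hK M.f M.compat_ρ
  h := by
    have fac : Fork.IsLimit.lift hK M.f M.compat_ρ ≫ K.ι M.c = M.f :=
      Fork.IsLimit.lift_ι' hK M.f M.compat_ρ
    rw [← cancel_mono ((S : D ⥤ D).map (K.ι M.c)), Category.assoc, Category.assoc, K.coaction,
      ← Functor.map_comp, fac, reassoc_of% fac, M.compat_lam]

theorem lift_f_comp_ι (M : TriangularComodule R S V ρ lam) (hK : IsLimit (K.fork M.c))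
    [Mono ((S : D ⥤ D).map (K.ι M.c))] : (lift M hK).f ≫ K.ι M.c = M.f :=
  Fork.IsLimit.lift_ι' hK M.f M.compat_ρ

variable [∀ X, Mono ((S : D ⥤ D).map (K.ι X))]

theorem toTriangularComodule_essSurj (hK : ∀ X, IsLimit (K.fork X)) :
    K.toTriangularComodule.EssSurj where
  mem_essImage M := by
    refine ⟨⟨M.d, M.c, lift M (hK M.c)⟩,
      ⟨TriangularComodule.isoMk (Iso.refl M.c) (Iso.refl M.d) ?_⟩⟩
    calc 𝟙 M.d.A ≫ M.f
        = (lift M (hK M.c)).f ≫ K.ι M.c := by rw [Category.id_comp, lift_f_comp_ι]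
      _ = ((lift M (hK M.c)).f ≫ K.ι M.c) ≫ V.map (𝟙 M.c.A) := by
          rw [V.map_id, Category.comp_id]

theorem toTriangularComodule_isEquivalence (hK : ∀ X, IsLimit (K.fork X)) :
    K.toTriangularComodule.IsEquivalence :=
  have (X : R.Coalgebra) : Mono (K.ι X) := mono_of_isLimit_fork (hK X)
  have := toTriangularComodule_essSurj hK
  { }

end CotensorCone

end Cotensor

theorem stmt_2_general
    (T : R.Coalgebra ⥤ S.Coalgebra)
    (e : ∀ X : R.Coalgebra, (T.obj X).A ⟶ V.obj X.A)
    (hw : ∀ X : R.Coalgebra, e X ≫ ρ.app X.A = e X ≫ V.map X.a)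
    (hlim : ∀ X : R.Coalgebra, Nonempty (IsLimit (Fork.ofι (e X) (hw X))))
    (hmono : ∀ X : R.Coalgebra, Mono ((S : D ⥤ D).map (e X)))
    (hcoact : ∀ X : R.Coalgebra,
      (T.obj X).a ≫ (S : D ⥤ D).map (e X) = e X ≫ lam.app X.A)
    (hnat : ∀ (X Y : R.Coalgebra) (g : X ⟶ Y),
      (T.map g).f ≫ e Y = e X ≫ V.map g.f) :
    Nonempty (TriangularComodule R S V ρ lam ≌ Comma (𝟭 S.Coalgebra) T) := by
  let K : CotensorCone ρ lam T := ⟨e, hnat _ _, hw, hcoact⟩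
  have : ∀ X, Mono ((S : D ⥤ D).map (K.ι X)) := hmono
  have := K.toTriangularComodule_isEquivalence fun X => (hlim X).some
  exact ⟨K.toTriangularComodule.asEquivalence.symm⟩

theorem stmt_2
    (hρ : ∀ X : C, ρ.app X ≫ V.map (R.δ.app X) = ρ.app X ≫ ρ.app ((R : C ⥤ C).obj X))
    (hlam : ∀ X : C, lam.app X ≫ S.δ.app (V.obj X) =
      lam.app X ≫ (S : D ⥤ D).map (lam.app X))
    (hcounitS : ∀ X : C, lam.app X ≫ S.ε.app (V.obj X) = 𝟙 (V.obj X))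
    (hcounitR : ∀ X : C, ρ.app X ≫ V.map (R.ε.app X) = 𝟙 (V.obj X))
    (hcomm : ∀ X : C, lam.app X ≫ (S : D ⥤ D).map (ρ.app X) =
      ρ.app X ≫ lam.app ((R : C ⥤ C).obj X))
    (heq : ∀ X : R.Coalgebra, HasEqualizer (ρ.app X.A) (V.map X.a))
    (hpres : ∀ X : R.Coalgebra,
      PreservesLimit (parallelPair (ρ.app X.A) (V.map X.a)) (S : D ⥤ D))
    -- `T` is the functor whose value at `(C, d_C)` is the equalizer of `ρ_C` and
    -- `V(d_C)`, with `S`-coaction induced by `λ`, and whose action on morphisms is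
    -- induced by the universal property of the equalizer:
    (T : R.Coalgebra ⥤ S.Coalgebra)
    (e : ∀ X : R.Coalgebra, (T.obj X).A ⟶ V.obj X.A)
    (hw : ∀ X : R.Coalgebra, e X ≫ ρ.app X.A = e X ≫ V.map X.a)
    (hlim : ∀ X : R.Coalgebra, Nonempty (IsLimit (Fork.ofι (e X) (hw X))))
    (hcoact : ∀ X : R.Coalgebra,
      (T.obj X).a ≫ (S : D ⥤ D).map (e X) = e X ≫ lam.app X.A)
    (hnat : ∀ (X Y : R.Coalgebra) (g : X ⟶ Y),
      (T.map g).f ≫ e Y = e X ≫ V.map g.f) :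
    Nonempty (TriangularComodule R S V ρ lam ≌ Comma (𝟭 S.Coalgebra) T) := by
  refine stmt_2_general R S V ρ lam T e hw hlim (fun X => ?_) hcoact hnat
  exact mono_map_of_isLimit_fork (S : D ⥤ D) (hlim X).some
end

section
/- If F₁₂ moreover preserves injective objects (it sends every injective object of A₁ to an injective object of A₂), then the comma category K = Comma(𝟭_{A₂}, F₁₂) has enough injectives. -/
/-!
STATEMENT 3: If `F₁₂` preserves injective objects, then the comma category
`K = Comma(𝟭 A₂, F₁₂)` (the category of comodules over the normal triangular 2×2
matrix comonad determined by `F₁₂`) has enough injectives.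
-/

open CategoryTheory Limits

universe v₁ v₂ u₁ u₂

/-!
The forgetful functor `Comma (𝟭 A₂) F ⥤ A₂ × A₁` has the right adjoint sending `(I, E)` to the
projection `I ⨯ F.obj E ⟶ F.obj E`. It is faithful, hence reflects monomorphisms. It preserves them
too: right components are tested on objects with initial left component, and then left components
can be tested because `F` preserves monomorphisms. So enough injectives transfer along the
adjunction from `A₂ × A₁`.
-/

open scoped CategoryTheory.Prod

section Product

variable {C : Type u₁} [Category.{v₁} C] {D : Type u₂} [Category.{v₂} D]

lemma prod_mono_iff {X Y : C × D} (f : X ⟶ Y) : Mono f ↔ Mono f.1 ∧ Mono f.2 := by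
  refine ⟨fun _ ↦ ⟨⟨fun {W} a b hab ↦ ?_⟩, ⟨fun {W} a b hab ↦ ?_⟩⟩,
    fun ⟨_, _⟩ ↦ ⟨fun a b hab ↦ ?_⟩⟩
  · have h : (a ×ₘ 𝟙 X.2 : (W, X.2) ⟶ X) = b ×ₘ 𝟙 X.2 :=
      (cancel_mono f).1 (Prod.hom_ext hab rfl)
    exact congrArg Prod.fst h
  · have h : (𝟙 X.1 ×ₘ a : (X.1, W) ⟶ X) = 𝟙 X.1 ×ₘ b :=
      (cancel_mono f).1 (Prod.hom_ext rfl hab)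
    exact congrArg Prod.snd h
  · exact Prod.hom_ext ((cancel_mono f.1).1 (congrArg Prod.fst hab))
      ((cancel_mono f.2).1 (congrArg Prod.snd hab))

instance prod_injective (I : C) (J : D) [Injective I] [Injective J] : Injective (I, J) where
  factors g f _ := by
    obtain ⟨_, _⟩ := (prod_mono_iff f).1 ‹_›
    exact ⟨Injective.factorThru g.1 f.1 ×ₘ Injective.factorThru g.2 f.2,
      Prod.hom_ext (Injective.comp_factorThru _ _) (Injective.comp_factorThru _ _)⟩

instance prod_enoughInjectives [EnoughInjectives C] [EnoughInjectives D] :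
    EnoughInjectives (C × D) where
  presentation X := ⟨{
    J := (Injective.under X.1, Injective.under X.2)
    f := Injective.ι X.1 ×ₘ Injective.ι X.2
    mono := (prod_mono_iff _).2 ⟨inferInstance, inferInstance⟩ }⟩

end Product

section Comma

variable {A : Type*} [Category* A] {B : Type*} [Category* B] {T : Type*} [Category* T]
  {L : A ⥤ T} {R : B ⥤ T}

lemma comma_mono_right [HasInitial A] [PreservesColimit (Functor.empty.{0} A) L]
    {X Y : Comma L R} (f : X ⟶ Y) [Mono f] : Mono f.right where
  right_cancellation {W} a b hab := by
    have hL : IsInitial (L.obj (⊥_ A)) := initialIsInitial.isInitialObj L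
    let Z : Comma L R := { left := ⊥_ A, right := W, hom := hL.to _ }
    let extend (c : W ⟶ X.right) : Z ⟶ X :=
      { left := initial.to _, right := c, w := hL.hom_ext _ _ }
    have h : extend a = extend b :=
      (cancel_mono f).1 (Comma.hom_ext _ _ rfl hab)
    exact congrArg CommaMorphism.right h

lemma comma_mono_left [R.PreservesMonomorphisms]
    {X Y : Comma L R} (f : X ⟶ Y) [Mono f] [Mono f.right] : Mono f.left where
  right_cancellation {W} a b hab := by
    have hom_eq : L.map a ≫ X.hom = L.map b ≫ X.hom := by
      rw [← cancel_mono (R.map f.right), Category.assoc, Category.assoc, ← f.w,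
        ← L.map_comp_assoc, ← L.map_comp_assoc, hab]
    let Z : Comma L R := { left := W, right := X.right, hom := L.map a ≫ X.hom }
    let a' : Z ⟶ X := { left := a, right := 𝟙 _ }
    let b' : Z ⟶ X := { left := b, right := 𝟙 _, w := by simp [Z, hom_eq] }
    have h : a' = b' := (cancel_mono f).1 (Comma.hom_ext _ _ hab rfl)
    exact congrArg CommaMorphism.left h

variable (L R)

/-- The forgetful functor from a comma category to the product of its two source categories,
which discards the structure morphism. -/
abbrev commaForget : Comma L R ⥤ A × B :=
  (Comma.fst L R).prod' (Comma.snd L R)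

instance commaForget_faithful : (commaForget L R).Faithful where
  map_injective h := Comma.hom_ext _ _ (congrArg Prod.fst h) (congrArg Prod.snd h)

instance commaForget_preservesMonomorphisms [HasInitial A]
    [PreservesColimit (Functor.empty.{0} A) L] [R.PreservesMonomorphisms] :
    (commaForget L R).PreservesMonomorphisms where
  preserves f _ :=
    have mono_right := comma_mono_right f
    (prod_mono_iff _).2 ⟨comma_mono_left f, mono_right⟩

end Comma

section Cofree

variable {A₁ : Type u₁} [Category.{v₁} A₁] {A₂ : Type u₂} [Category.{v₂} A₂]
  [HasBinaryProducts A₂] (F : A₁ ⥤ A₂)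

/-- The cofree comodule on a pair `(I, E)`, that is, the projection `I ⨯ F.obj E ⟶ F.obj E`. -/
noncomputable abbrev commaCofree (P : A₂ × A₁) : Comma (𝟭 A₂) F where
  left := P.1 ⨯ F.obj P.2
  right := P.2
  hom := prod.snd

/-- The universal property of the cofree comodule: a morphism into it is freely determined by the
pair consisting of the `P.1`-part of its left component and its right component. -/
noncomputable def commaCofreeHomEquiv (X : Comma (𝟭 A₂) F) (P : A₂ × A₁) :
    ((commaForget (𝟭 A₂) F).obj X ⟶ P) ≃ (X ⟶ commaCofree F P) where
  toFun f := { left := prod.lift f.1 (X.hom ≫ F.map f.2), right := f.2, w := prod.lift_snd _ _ }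
  invFun g := (g.left ≫ prod.fst) ×ₘ g.right
  left_inv _ := Prod.hom_ext (prod.lift_fst _ _) rfl
  right_inv g := Comma.hom_ext _ _
    (prod.hom_ext (prod.lift_fst _ _) ((prod.lift_snd _ _).trans g.w.symm)) rfl

lemma commaCofreeHomEquiv_naturality_left (X' X : Comma (𝟭 A₂) F) (P : A₂ × A₁) (f : X' ⟶ X)
    (g : (commaForget (𝟭 A₂) F).obj X ⟶ P) :
    commaCofreeHomEquiv F X' P ((commaForget (𝟭 A₂) F).map f ≫ g) =
      f ≫ commaCofreeHomEquiv F X P g := by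
  have hom_eq : X'.hom ≫ F.map (f.right ≫ g.2) = f.left ≫ X.hom ≫ F.map g.2 := by
    rw [F.map_comp, ← f.w_assoc, Functor.id_map]
  refine Comma.hom_ext _ _ ?_ rfl
  calc prod.lift (f.left ≫ g.1) (X'.hom ≫ F.map (f.right ≫ g.2))
      = prod.lift (f.left ≫ g.1) (f.left ≫ X.hom ≫ F.map g.2) := by rw [hom_eq]
    _ = f.left ≫ prod.lift g.1 (X.hom ≫ F.map g.2) := (prod.comp_lift _ _ _).symm

instance commaForget_isLeftAdjoint : (commaForget (𝟭 A₂) F).IsLeftAdjoint :=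
  (Adjunction.adjunctionOfEquivRight _ (commaCofreeHomEquiv_naturality_left F)).isLeftAdjoint

end Cofree

theorem stmt_3_general {A₁ : Type u₁} [Category.{v₁} A₁] [EnoughInjectives A₁]
    {A₂ : Type u₂} [Category.{v₂} A₂] [EnoughInjectives A₂] [HasInitial A₂]
    [HasBinaryProducts A₂] (F : A₁ ⥤ A₂) [F.PreservesMonomorphisms] :
    EnoughInjectives (Comma (𝟭 A₂) F) :=
  EnoughInjectives.of_adjunction (.ofIsLeftAdjoint (commaForget (𝟭 A₂) F))

theorem stmt_3 {A₁ : Type u₁} [Category.{v₁} A₁] [Abelian A₁] [EnoughInjectives A₁]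
    {A₂ : Type u₂} [Category.{v₂} A₂] [Abelian A₂] [EnoughInjectives A₂]
    (F : A₁ ⥤ A₂) [F.Additive] [PreservesFiniteLimits F]
    (hF : ∀ E : A₁, Injective E → Injective (F.obj E)) :
    EnoughInjectives (Comma (𝟭 A₂) F) :=
  stmt_3_general F
end

section
/- Assume F₁₂ preserves injective objects. If X = (X₂, X₁, d_X) is an injective object of the comma category K = Comma(𝟭_{A₂}, F₁₂), then X₁ is injective in A₁, X₂ is injective in A₂, the morphism d_X : X₂ ⟶ F₁₂(X₁) is a split epimorphism, and there exist injective objects E₁ ∈ A₁ and E₂ ∈ A₂ together with an isomorphism X ≅ G(E₁, E₂) in K. -/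
/-!
STATEMENT 4: Assume `F₁₂` preserves injective objects. If `X = (X₂, X₁, d_X)` is an
injective object of the comma category `K = Comma(𝟭 A₂, F₁₂)`, then `X₁` is injective
in `A₁`, `X₂` is injective in `A₂`, `d_X` is a split epimorphism, and `X ≅ G(E₁, E₂)`
for some injective objects `E₁ ∈ A₁`, `E₂ ∈ A₂`, where `G(E₁,E₂) = (F₁₂E₁ ⊞ E₂, E₁, π)`
is the cofree comodule.
-/

open CategoryTheory Limits

universe v₁ v₂ u₁ u₂

variable {A₁ : Type u₁} [Category.{v₁} A₁] [Abelian A₁] [EnoughInjectives A₁]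
variable {A₂ : Type u₂} [Category.{v₂} A₂] [Abelian A₂] [EnoughInjectives A₂]
variable (F : A₁ ⥤ A₂)

/-- The cofree comodule `G(E₁, E₂) = (F₁₂(E₁) ⊞ E₂, E₁, π)`, where `π` is the
biproduct projection onto `F₁₂(E₁)`. -/
noncomputable def cofreeComodule (E₁ : A₁) (E₂ : A₂) : Comma (𝟭 A₂) F where
  left := F.obj E₁ ⊞ E₂
  right := E₁
  hom := biprod.fst

/-!
Everything follows by extending morphisms into `X` along well-chosen monomorphisms. Those of the
form `(⊥, Y) ⟶ (⊥, Z)` show that `X₁` is injective, and those of the form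
`(Y, X₁, 0) ⟶ (Z, X₁, 0)` show that `ker d_X` is injective. The unit `X ⟶ G(X₁, X₂)` has a
retraction whose component at `X₁` is the identity, so restricting its other component to `F X₁`
gives a section of `d_X`. Hence `X ≅ G(X₁, ker d_X)`, and `X₂ ≅ F X₁ ⊞ ker d_X` is injective.
-/

section Comma

variable {A B T : Type*} [Category* A] [Category* B] [Category* T] {L : A ⥤ T} {R : B ⥤ T}

theorem mono_comma_of_mono_left_of_mono_right {X Y : Comma L R} (f : X ⟶ Y)
    [Mono f.left] [Mono f.right] : Mono f where
  right_cancellation g h eq := by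
    ext
    · exact (cancel_mono f.left).1 (congrArg CommaMorphism.left eq)
    · exact (cancel_mono f.right).1 (congrArg CommaMorphism.right eq)

theorem injective_right_of_injective_comma [HasInitial A] [PreservesColimit (Functor.empty.{0} A) L]
    (X : Comma L R) [Injective X] : Injective X.right where
  factors {Y Z} g f _ := by
    let isInitial : IsInitial (L.obj (⊥_ A)) := initialIsInitial.isInitialObj L
    let fromInitial (W : B) : Comma L R := { left := ⊥_ A, right := W, hom := isInitial.to _ }
    let inclusion : fromInitial Y ⟶ fromInitial Z :=
      { left := 𝟙 _, right := f, w := isInitial.hom_ext _ _ }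
    let toX : fromInitial Y ⟶ X :=
      { left := initial.to _, right := g, w := isInitial.hom_ext _ _ }
    have : Mono inclusion.left := inferInstanceAs (Mono (𝟙 _))
    have : Mono inclusion.right := inferInstanceAs (Mono f)
    have := mono_comma_of_mono_left_of_mono_right inclusion
    exact ⟨(Injective.factorThru toX inclusion).right,
      congrArg CommaMorphism.right (Injective.comp_factorThru toX inclusion)⟩

end Comma

section ZeroMorphisms

variable {C D : Type*} [Category* C] [Category* D] [HasZeroMorphisms D] {R : C ⥤ D}

theorem injective_kernel_hom_of_injective_comma (X : Comma (𝟭 D) R) [Injective X]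
    [HasKernel X.hom] : Injective (kernel X.hom) where
  factors {Y Z} g f _ := by
    let withZeroHom (W : D) : Comma (𝟭 D) R := { left := W, right := X.right, hom := 0 }
    let inclusion : withZeroHom Y ⟶ withZeroHom Z :=
      { left := f, right := 𝟙 _, w := by simp [withZeroHom] }
    let toX : withZeroHom Y ⟶ X :=
      { left := g ≫ kernel.ι X.hom, right := 𝟙 _, w := by simp [withZeroHom] }
    have : Mono inclusion.left := inferInstanceAs (Mono f)
    have : Mono inclusion.right := inferInstanceAs (Mono (𝟙 _))
    have := mono_comma_of_mono_left_of_mono_right inclusion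
    let extension : withZeroHom Z ⟶ X := Injective.factorThru toX inclusion
    have extends_left : f ≫ extension.left = g ≫ kernel.ι X.hom :=
      congrArg CommaMorphism.left (Injective.comp_factorThru toX inclusion)
    have left_comp_hom : extension.left ≫ X.hom = 0 := extension.w.trans zero_comp
    refine ⟨kernel.lift X.hom extension.left left_comp_hom, ?_⟩
    rw [← cancel_mono (kernel.ι X.hom), Category.assoc, kernel.lift_ι, extends_left]

end ZeroMorphisms

theorem exists_iso_biprod_kernel_of_isSplitEpi {C : Type*} [Category* C] [Preadditive C] {X Y : C}
    (f : X ⟶ Y) [IsSplitEpi f] [HasKernel f] [HasBinaryBiproducts C] :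
    ∃ e : X ≅ Y ⊞ kernel f, e.hom ≫ biprod.fst = f := by
  let e : X ≅ kernel f ⊞ Y :=
    biprod.uniqueUpToIso _ _ (isBilimitBinaryBiconeOfIsSplitEpiOfKernel (kernelIsKernel f))
  have e_hom_snd : e.hom ≫ biprod.snd = f := biprod.lift_snd _ _
  exact ⟨e ≪≫ biprod.braiding _ _, by simpa using e_hom_snd⟩

section Abelian

variable {C D : Type*} [Category* C] [Category* D] [Abelian D] {R : C ⥤ D}

/-- The unit `X ⟶ G(X₁, X₂)` of the adjunction between the forgetful functor
`Comma (𝟭 D) R ⥤ C × D` and the cofree functor. -/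
noncomputable def cofreeComoduleUnit (X : Comma (𝟭 D) R) : X ⟶ cofreeComodule R X.right X.left where
  left := biprod.lift X.hom (𝟙 _)
  right := 𝟙 _
  w := by simp [cofreeComodule]

instance mono_cofreeComoduleUnit (X : Comma (𝟭 D) R) : Mono (cofreeComoduleUnit X) := by
  have : Mono (cofreeComoduleUnit X).left :=
    mono_of_mono_fac (biprod.lift_snd X.hom (𝟙 X.left))
  have : Mono (cofreeComoduleUnit X).right := inferInstanceAs (Mono (𝟙 _))
  exact mono_comma_of_mono_left_of_mono_right _

theorem isSplitEpi_hom_of_injective_comma (X : Comma (𝟭 D) R) [Injective X] :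
    IsSplitEpi X.hom := by
  let retraction : cofreeComodule R X.right X.left ⟶ X :=
    Injective.factorThru (𝟙 X) (cofreeComoduleUnit X)
  have retraction_right : retraction.right = 𝟙 X.right :=
    (Category.id_comp _).symm.trans <|
      congrArg CommaMorphism.right (Injective.comp_factorThru (𝟙 X) (cofreeComoduleUnit X))
  obtain ⟨p, p_comp_hom⟩ :
      ∃ p : R.obj X.right ⊞ X.left ⟶ (𝟭 D).obj X.left, p ≫ X.hom = biprod.fst :=
    ⟨retraction.left, by simpa [retraction_right, cofreeComodule] using retraction.w⟩
  exact ⟨⟨biprod.inl ≫ p, by rw [Category.assoc, p_comp_hom, biprod.inl_fst]⟩⟩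

theorem nonempty_iso_cofreeComodule_of_isSplitEpi (X : Comma (𝟭 D) R) [IsSplitEpi X.hom] :
    Nonempty (X ≅ cofreeComodule R X.right (kernel X.hom)) := by
  obtain ⟨e, e_hom_fst⟩ := exists_iso_biprod_kernel_of_isSplitEpi X.hom
  exact ⟨Comma.isoMk e (Iso.refl _) (by simpa [cofreeComodule] using e_hom_fst)⟩

theorem stmt_4_general [R.PreservesInjectiveObjects] (X : Comma (𝟭 D) R) [Injective X] :
    Injective X.right ∧ Injective X.left ∧ IsSplitEpi X.hom ∧
      ∃ (E₁ : C) (E₂ : D), Injective E₁ ∧ Injective E₂ ∧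
        Nonempty (X ≅ cofreeComodule R E₁ E₂) := by
  have right_injective : Injective X.right := injective_right_of_injective_comma X
  have kernel_injective : Injective (kernel X.hom) := injective_kernel_hom_of_injective_comma X
  have hom_split : IsSplitEpi X.hom := isSplitEpi_hom_of_injective_comma X
  obtain ⟨e⟩ := nonempty_iso_cofreeComodule_of_isSplitEpi X
  have left_injective : Injective X.left :=
    Injective.of_iso ((Comma.fst _ _).mapIso e).symm
      (inferInstanceAs (Injective (R.obj X.right ⊞ kernel X.hom)))
  exact ⟨right_injective, left_injective, hom_split,
    X.right, kernel X.hom, right_injective, kernel_injective, ⟨e⟩⟩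

end Abelian

theorem stmt_4 [F.Additive] [PreservesFiniteLimits F]
    (hF : ∀ E : A₁, Injective E → Injective (F.obj E))
    (X : Comma (𝟭 A₂) F) (hX : Injective X) :
    Injective X.right ∧ Injective X.left ∧ IsSplitEpi X.hom ∧
      ∃ (E₁ : A₁) (E₂ : A₂), Injective E₁ ∧ Injective E₂ ∧
        Nonempty (X ≅ cofreeComodule F E₁ E₂) := by
  have : F.PreservesInjectiveObjects := ⟨fun {E} hE => hF E hE⟩
  exact stmt_4_general X
end

section
/- Assume F₁₂ preserves injective objects. Then for every object X = (X₂, X₁, d_X) of the comma category K = Comma(𝟭_{A₂}, F₁₂) and every natural number d, if X₁ has injective dimension ≤ d in A₁ and X₂ has injective dimension ≤ d in A₂, then X has injective dimension ≤ d + 1 in K. -/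
/-!
STATEMENT 5: Assume `F₁₂` preserves injective objects. Then for every object
`X = (X₂, X₁, d_X)` of `K = Comma(𝟭 A₂, F₁₂)` and every `d : ℕ`, if `X₁` has injective
dimension ≤ d in `A₁` and `X₂` has injective dimension ≤ d in `A₂`, then `X` has
injective dimension ≤ d + 1 in `K`.  (`K` is abelian; we record this provable fact
as an instance hypothesis.)
-/

open CategoryTheory Limits

universe w v₁ v₂ u₁ u₂

/-- `InjDimLE d X` : the object `X` of an abelian category has injective dimension
`≤ d`, i.e. there is an exact sequence `0 → X → E⁰ → ⋯ → E^d → 0` with all `Eⁱ`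
injective; formulated by recursion: for `d = 0` this means `X` is injective, and for
`d+1` it means `X` embeds in an injective `E` with `coker(X ⟶ E)` of dimension `≤ d`. -/
def InjDimLE {C : Type w} [Category C] [Abelian C] : ℕ → C → Prop
  | 0, X => Injective X
  | (d + 1), X => ∃ (E : C) (f : X ⟶ E), Injective E ∧ Mono f ∧ InjDimLE d (cokernel f)

/-!
For `X = (X₂, X₁, d_X)`, the object `(F E ⊞ I, E, fst)` represents
`X ↦ Hom(X₁, E) × Hom(X₂, I)`, so it is injective when `E` and `I` are, and embeddings `X₁ ⟶ E`,
`X₂ ⟶ I` assemble to an embedding of `X` into it. Cokernels in the comma category are computed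
componentwise. Since `F E` is injective, the component `X₂ ⟶ F E` extends along `X₂ ⟶ I`, and a
shear of `F E ⊞ I` identifies the `A₂`-component of the cokernel with `F E ⊞ (I / X₂)`. Thus one
step of the two given resolutions lowers both dimensions by one. Once `X₁` and `X₂` are injective,
a last step with identities leaves the cokernel `(F X₁, 0, 0)`, which is injective.
-/

section Biproducts

variable {C : Type*} [Category C]

/-- Adding an identity summand to a morphism does not change its cokernel. -/
noncomputable def cokernelBiprodMapIdIso [HasZeroMorphisms C] [HasBinaryBiproducts C]
    [HasCokernels C] (B : C) {X Y : C} (f : X ⟶ Y) :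
    cokernel (biprod.map (𝟙 B) f) ≅ cokernel f where
  hom := cokernel.desc _ (biprod.snd ≫ cokernel.π f) (by simp)
  inv := cokernel.desc _ (biprod.inr ≫ cokernel.π (biprod.map (𝟙 B) f)) (by
    rw [← biprod.inr_map_assoc, cokernel.condition, comp_zero])
  hom_inv_id := by
    have inl_π : biprod.inl ≫ cokernel.π (biprod.map (𝟙 B) f) = 0 := by
      simpa using (biprod.inl_map_assoc (𝟙 B) f (cokernel.π (biprod.map (𝟙 B) f))).symm
    ext <;> simp [inl_π]

/-- A shear of `B ⊞ Y` turns `biprod.lift (i ≫ g) i` into `biprod.lift 0 i`, whose cokernel is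
`B ⊞ cokernel i`. -/
noncomputable def cokernelBiprodLiftIso [Preadditive C] [HasBinaryBiproducts C] [HasCokernels C]
    {X Y B : C} (i : X ⟶ Y) (g : Y ⟶ B) :
    cokernel (biprod.lift (i ≫ g) i) ≅ B ⊞ cokernel i where
  hom := cokernel.desc _ (biprod.lift (biprod.fst - biprod.snd ≫ g) (biprod.snd ≫ cokernel.π i))
    (by ext <;> simp)
  inv := biprod.desc (biprod.inl ≫ cokernel.π _)
    (cokernel.desc _ (biprod.lift g (𝟙 Y) ≫ cokernel.π (biprod.lift (i ≫ g) i)) (by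
      have comp_lift : i ≫ biprod.lift g (𝟙 Y) = biprod.lift (i ≫ g) i := by ext <;> simp
      rw [reassoc_of% comp_lift, cokernel.condition]))
  hom_inv_id := by
    ext <;> simp [biprod.lift_eq]
  inv_hom_id := by
    ext <;> simp

end Biproducts

namespace InjDimLE

variable {C : Type*} [Category C] [Abelian C]

theorem of_iso {d : ℕ} {X Y : C} (e : X ≅ Y) (hX : InjDimLE d X) : InjDimLE d Y := by
  cases d with
  | zero => exact Injective.of_iso e hX
  | succ d =>
    obtain ⟨E, f, hE, hf, hcoker⟩ := hX
    exact ⟨E, e.inv ≫ f, hE, inferInstance, hcoker.of_iso (cokernelEpiComp e.inv f).symm⟩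

theorem biprod_of_injective {d : ℕ} (B : C) [Injective B] {X : C} (hX : InjDimLE d X) :
    InjDimLE d (B ⊞ X) := by
  cases d with
  | zero =>
    have : Injective X := hX
    exact inferInstanceAs (Injective (B ⊞ X))
  | succ d =>
    obtain ⟨E, f, hE, hf, hcoker⟩ := hX
    exact ⟨B ⊞ E, biprod.map (𝟙 B) f, inferInstance, inferInstance,
      hcoker.of_iso (cokernelBiprodMapIdIso B f).symm⟩

theorem cokernel_biprod_lift {d : ℕ} {X Y B : C} [Injective B] (b : X ⟶ B) (i : X ⟶ Y) [Mono i]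
    (hi : InjDimLE d (cokernel i)) : InjDimLE d (cokernel (biprod.lift b i)) := by
  rw [← Injective.comp_factorThru b i]
  exact (hi.biprod_of_injective B).of_iso (cokernelBiprodLiftIso i (Injective.factorThru b i)).symm

end InjDimLE

section CommaLimits

variable {A B T J : Type*} [Category A] [Category B] [Category T] [Category J] (L : A ⥤ T)
  (R : B ⥤ T) [HasLimitsOfShape J A] [HasLimitsOfShape J B] [PreservesLimitsOfShape J R]

instance preservesLimitsOfShape_comma_fst : PreservesLimitsOfShape J (Comma.fst L R) where
  preservesLimit := preservesLimit_of_preserves_limit_cone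
    (Comma.coneOfPreservesIsLimit _ (limit.isLimit _) (limit.isLimit _)) (limit.isLimit _)

instance preservesLimitsOfShape_comma_snd : PreservesLimitsOfShape J (Comma.snd L R) where
  preservesLimit := preservesLimit_of_preserves_limit_cone
    (Comma.coneOfPreservesIsLimit _ (limit.isLimit _) (limit.isLimit _)) (limit.isLimit _)

end CommaLimits

section CommaCokernel

variable {A B T : Type*} [Category A] [Category B] [Category T] {L : A ⥤ T} {R : B ⥤ T}
  [HasZeroObject A] [HasZeroMorphisms A] [HasFiniteColimits A]
  [HasZeroObject B] [HasZeroMorphisms B] [HasFiniteColimits B]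
  [PreservesFiniteColimits L] [HasZeroObject (Comma L R)] [HasZeroMorphisms (Comma L R)]

/-- The `left` component of a cokernel in a comma category is the cokernel of the `left`
components. -/
noncomputable def cokernelLeftIso {X Y : Comma L R} (f : X ⟶ Y) :
    (cokernel f).left ≅ cokernel f.left :=
  PreservesCokernel.iso (Comma.fst L R) f

/-- The `right` component of a cokernel in a comma category is the cokernel of the `right`
components. -/
noncomputable def cokernelRightIso {X Y : Comma L R} (f : X ⟶ Y) :
    (cokernel f).right ≅ cokernel f.right :=
  PreservesCokernel.iso (Comma.snd L R) f

end CommaCokernel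

section CofreeComma

variable {A₁ : Type*} [Category A₁] {A₂ : Type*} [Category A₂] [HasZeroMorphisms A₂]
  [HasBinaryBiproducts A₂] (F : A₁ ⥤ A₂)

/-- The cofree object `(F E ⊞ I, E, fst)` of the comma category on `E` and `I`: it is the value at
`(E, I)` of the right adjoint of `X ↦ (X.right, X.left)`. -/
noncomputable def cofreeComma (E : A₁) (I : A₂) : Comma (𝟭 A₂) F where
  left := F.obj E ⊞ I
  right := E
  hom := (biprod.fst : F.obj E ⊞ I ⟶ F.obj E)

namespace cofreeComma

variable {F} {X Y : Comma (𝟭 A₂) F} {E : A₁} {I : A₂}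

/-- The morphism into the cofree object that corresponds to its two components. -/
noncomputable def lift (e : X.right ⟶ E) (i : X.left ⟶ I) : X ⟶ cofreeComma F E I where
  left := (biprod.lift (X.hom ≫ F.map e) i : X.left ⟶ F.obj E ⊞ I)
  right := e
  w := biprod.lift_fst _ _

theorem exists_eq_lift (g : X ⟶ cofreeComma F E I) :
    ∃ (e : X.right ⟶ E) (i : X.left ⟶ I), g = lift e i := by
  let gLeft : X.left ⟶ F.obj E ⊞ I := g.left
  refine ⟨g.right, gLeft ≫ biprod.snd, Comma.hom_ext _ _ ?_ rfl⟩
  exact biprod.hom_ext gLeft _ (g.w.trans (biprod.lift_fst _ _).symm) (biprod.lift_snd _ _).symm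

theorem comp_lift (f : X ⟶ Y) (e : Y.right ⟶ E) (i : Y.left ⟶ I) :
    f ≫ lift e i = lift (f.right ≫ e) (f.left ≫ i) := by
  refine Comma.hom_ext _ _ ?_ rfl
  have hom_comp : f.left ≫ Y.hom ≫ F.map e = X.hom ≫ F.map (f.right ≫ e) := by
    rw [F.map_comp]
    exact f.w_assoc _
  change f.left ≫ biprod.lift (Y.hom ≫ F.map e) i = biprod.lift _ (f.left ≫ i)
  rw [← hom_comp]
  ext <;> simp

instance mono_lift_left (e : X.right ⟶ E) (i : X.left ⟶ I) [Mono i] : Mono (lift e i).left :=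
  have : Mono (biprod.lift (X.hom ≫ F.map e) i ≫ biprod.snd) := by
    rwa [biprod.lift_snd]
  mono_of_mono (biprod.lift (X.hom ≫ F.map e) i) biprod.snd

instance mono_lift (e : X.right ⟶ E) (i : X.left ⟶ I) [Mono e] [Mono i] : Mono (lift e i) where
  right_cancellation _ _ h := by
    ext
    · exact (cancel_mono (lift e i).left).1 (congrArg CommaMorphism.left h)
    · exact (cancel_mono e).1 (congrArg CommaMorphism.right h)

variable [HasPullbacks A₁] [HasPullbacks A₂] [PreservesLimitsOfShape WalkingCospan F]

instance injective [Injective E] [Injective I] : Injective (cofreeComma F E I) where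
  factors {X Y} g f _ := by
    have : Mono f.left := inferInstanceAs (Mono ((Comma.fst (𝟭 A₂) F).map f))
    have : Mono f.right := inferInstanceAs (Mono ((Comma.snd (𝟭 A₂) F).map f))
    obtain ⟨e, i, rfl⟩ := exists_eq_lift g
    refine ⟨lift (Injective.factorThru e f.right) (Injective.factorThru i f.left), ?_⟩
    rw [comp_lift, Injective.comp_factorThru, Injective.comp_factorThru]

end cofreeComma

variable {F} in
theorem injective_comma_of_isZero_obj_right [HasPullbacks A₁] [HasPullbacks A₂]
    [PreservesLimitsOfShape WalkingCospan F] (X : Comma (𝟭 A₂) F) [Injective X.right]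
    [Injective X.left] (hX : IsZero (F.obj X.right)) : Injective X :=
  let retract : Retract X (cofreeComma F X.right X.left) :=
    { i := cofreeComma.lift (𝟙 _) (𝟙 _)
      r := { left := (biprod.snd : F.obj X.right ⊞ X.left ⟶ X.left)
             right := 𝟙 X.right
             w := hX.eq_of_tgt _ _ }
      retract := by
        ext
        · exact biprod.lift_snd _ _
        · exact Category.comp_id _ }
  retract.injective

end CofreeComma

section InjectiveDimension

variable {A₁ : Type u₁} [Category.{v₁} A₁] [Abelian A₁] {A₂ : Type u₂} [Category.{v₂} A₂]
  [Abelian A₂] {F : A₁ ⥤ A₂} [Abelian (Comma (𝟭 A₂) F)]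
  [F.PreservesInjectiveObjects]

theorem injDimLE_left_cokernel_cofreeComma_lift {d : ℕ} {X : Comma (𝟭 A₂) F} {E : A₁} {I : A₂}
    [Injective E] (e : X.right ⟶ E) (i : X.left ⟶ I) [Mono i] (hi : InjDimLE d (cokernel i)) :
    InjDimLE d (cokernel (cofreeComma.lift e i)).left :=
  (hi.cokernel_biprod_lift (X.hom ≫ F.map e) i).of_iso
    (cokernelLeftIso (cofreeComma.lift e i)).symm

variable [PreservesFiniteLimits F]

theorem injDimLE_one_comma_of_injective (X : Comma (𝟭 A₂) F) [Injective X.right]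
    [Injective X.left] : InjDimLE 1 X := by
  let ι : X ⟶ cofreeComma F X.right X.left := cofreeComma.lift (𝟙 _) (𝟙 _)
  have isZero_right : IsZero (cokernel ι).right :=
    (isZero_cokernel_of_epi (𝟙 X.right)).of_iso (cokernelRightIso ι)
  have : Injective (cokernel ι).right := isZero_right.injective
  have : Injective (cokernel ι).left :=
    injDimLE_left_cokernel_cofreeComma_lift (d := 0) (𝟙 X.right) (𝟙 X.left)
      (isZero_cokernel_of_epi (𝟙 X.left)).injective
  exact ⟨_, ι, inferInstance, inferInstance,
    injective_comma_of_isZero_obj_right _ (F.map_isZero isZero_right)⟩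

end InjectiveDimension

theorem stmt_5_general {A₁ : Type u₁} [Category.{v₁} A₁] [Abelian A₁]
    {A₂ : Type u₂} [Category.{v₂} A₂] [Abelian A₂]
    (F : A₁ ⥤ A₂) [PreservesFiniteLimits F] [F.PreservesInjectiveObjects]
    [Abelian (Comma (𝟭 A₂) F)] (X : Comma (𝟭 A₂) F) (d : ℕ)
    (h₁ : InjDimLE d X.right) (h₂ : InjDimLE d X.left) :
    InjDimLE (d + 1) X := by
  induction d generalizing X with
  | zero =>
    have : Injective X.right := h₁
    have : Injective X.left := h₂
    exact injDimLE_one_comma_of_injective X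
  | succ d ih =>
    obtain ⟨E, e, hE, he, coker_e⟩ := h₁
    obtain ⟨I, i, hI, hi, coker_i⟩ := h₂
    exact ⟨_, cofreeComma.lift e i, inferInstance, inferInstance,
      ih _ (coker_e.of_iso (cokernelRightIso (cofreeComma.lift e i)).symm)
        (injDimLE_left_cokernel_cofreeComma_lift e i coker_i)⟩

theorem stmt_5 {A₁ : Type u₁} [Category.{v₁} A₁] [Abelian A₁] [EnoughInjectives A₁]
    {A₂ : Type u₂} [Category.{v₂} A₂] [Abelian A₂] [EnoughInjectives A₂]
    (F : A₁ ⥤ A₂) [F.Additive] [PreservesFiniteLimits F]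
    [Abelian (Comma (𝟭 A₂) F)]
    (hF : ∀ E : A₁, Injective E → Injective (F.obj E))
    (X : Comma (𝟭 A₂) F) (d : ℕ)
    (h₁ : InjDimLE d X.right) (h₂ : InjDimLE d X.left) :
    InjDimLE (d + 1) X := by
  have : F.PreservesInjectiveObjects := ⟨fun {E} hE ↦ hF E hE⟩
  exact stmt_5_general F X d h₁ h₂
end

section
/- Assume F₁₂ preserves injective objects, and let K = Comma(𝟭_{A₂}, F₁₂). Then: (i) if there is d such that every object of A₁ and every object of A₂ has injective dimension ≤ d, then every object of K has injective dimension ≤ d + 1; and (ii) if every object of K has injective dimension ≤ d, then every object of A₁ and every object of A₂ has injective dimension ≤ d. In other words, gl.dim(K) ≤ max{gl.dim(A₁), gl.dim(A₂)} + 1 ≤ gl.dim(K) + 1, where gl.dim denotes the supremum of injective dimensions of objects. -/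
/-!
STATEMENT 6: Assume `F₁₂` preserves injective objects and let `K = Comma(𝟭 A₂, F₁₂)`.
Then (i) if every object of `A₁` and of `A₂` has injective dimension ≤ d, every object
of `K` has injective dimension ≤ d + 1; and (ii) if every object of `K` has injective
dimension ≤ d, then every object of `A₁` and of `A₂` has injective dimension ≤ d.
(That is, gl.dim K ≤ max{gl.dim A₁, gl.dim A₂} + 1 ≤ gl.dim K + 1.)
-/

open CategoryTheory Limits

universe w v₁ v₂ u₁ u₂

/-!
Call `A₁` the open and `A₂` the closed part of `K`. The projections `j^* : K ⥤ A₁`, `i^* : K ⥤ A₂`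
have adjoints `j_! ⊣ j^* ⊣ j_*` and `i^* ⊣ i_*`, and every object `X` of `K` sits in a short exact
sequence `0 ⟶ j_! j^* X ⟶ X ⟶ i_* i^* X ⟶ 0`. The functor `i_*` is exact and preserves
injectives, so it does not raise injective dimensions. The functor `j_!` is exact and raises them by
at most one: for `E` injective, the sequence of `X = j_* E` reads
`0 ⟶ j_! E ⟶ j_* E ⟶ i_* F E ⟶ 0` and is an injective resolution of `j_! E`. Conversely, `j^*` and
`i^*` are exact, preserve injectives, and have the sections `j_!` and `i_*`.
-/

open ZeroObject

section InjectiveDimension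

variable {C : Type u₁} [Category.{v₁} C] [Abelian C]

lemma shortExact_cokernel {X Y : C} (f : X ⟶ Y) [Mono f] :
    (ShortComplex.mk f (cokernel.π f) (cokernel.condition f)).ShortExact where
  exact := ShortComplex.exact_cokernel f

lemma injDimLE_iff_hasInjectiveDimensionLE [EnoughInjectives C] {d : ℕ} {X : C} :
    InjDimLE d X ↔ HasInjectiveDimensionLE X d := by
  induction d generalizing X with
  | zero => exact injective_iff_hasInjectiveDimensionLT_one
  | succ d ih =>
    constructor
    · rintro ⟨E, f, hE, _, hcoker⟩
      exact ((shortExact_cokernel f).hasInjectiveDimensionLT_X₃_iff d hE).1 (ih.1 hcoker)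
    · intro hX
      have hcoker : HasInjectiveDimensionLE (cokernel (Injective.ι X)) d :=
        ((shortExact_cokernel (Injective.ι X)).hasInjectiveDimensionLT_X₃_iff d inferInstance).2 hX
      exact ⟨Injective.under X, Injective.ι X, inferInstance, inferInstance, ih.2 hcoker⟩

variable {D : Type u₂} [Category.{v₂} D] [Abelian D]

lemma hasInjectiveDimensionLE_obj_add [EnoughInjectives C] (G : C ⥤ D)
    [G.PreservesZeroMorphisms] [G.PreservesHomology]
    [G.PreservesMonomorphisms] [G.PreservesEpimorphisms] {k : ℕ}
    (hG : ∀ E : C, Injective E → HasInjectiveDimensionLE (G.obj E) k)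
    {d : ℕ} {X : C} (hX : HasInjectiveDimensionLE X d) :
    HasInjectiveDimensionLE (G.obj X) (d + k) := by
  induction d generalizing X with
  | zero =>
    rw [Nat.zero_add]
    exact hG X (injective_iff_hasInjectiveDimensionLT_one.2 hX)
  | succ d ih =>
    have hS := shortExact_cokernel (Injective.ι X)
    have hcoker : HasInjectiveDimensionLE (G.obj (cokernel (Injective.ι X))) (d + k) :=
      ih ((hS.hasInjectiveDimensionLT_X₃_iff d inferInstance).2 hX)
    have hunder := hG (Injective.under X) inferInstance
    rw [Nat.add_right_comm]
    exact (hS.map G).hasInjectiveDimensionLT_X₁ (d + k + 1) hcoker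
      (hasInjectiveDimensionLT_of_ge (G.obj (Injective.under X)) (k + 1) _ (by lia))

lemma hasInjectiveDimensionLE_obj [EnoughInjectives C] (G : C ⥤ D)
    [G.PreservesZeroMorphisms] [G.PreservesHomology]
    [G.PreservesMonomorphisms] [G.PreservesEpimorphisms] [G.PreservesInjectiveObjects]
    {d : ℕ} {X : C} (hX : HasInjectiveDimensionLE X d) :
    HasInjectiveDimensionLE (G.obj X) d :=
  hasInjectiveDimensionLE_obj_add G (k := 0) (fun _ _ ↦ inferInstance) hX

end InjectiveDimension

section CommaCategory

variable {A B T : Type*} [Category* A] [Category* B] [Category* T] {L : A ⥤ T} {R : B ⥤ T}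

lemma comma_mono_of_mono_left_right {X Y : Comma L R} (f : X ⟶ Y)
    [Mono f.left] [Mono f.right] : Mono f where
  right_cancellation g h e := by
    ext
    · exact (cancel_mono f.left).1 (congrArg CommaMorphism.left e)
    · exact (cancel_mono f.right).1 (congrArg CommaMorphism.right e)

lemma comma_epi_of_epi_left_right {X Y : Comma L R} (f : X ⟶ Y)
    [Epi f.left] [Epi f.right] : Epi f where
  left_cancellation g h e := by
    ext
    · exact (cancel_epi f.left).1 (congrArg CommaMorphism.left e)
    · exact (cancel_epi f.right).1 (congrArg CommaMorphism.right e)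

instance preservesFiniteLimits_comma_fst [HasFiniteLimits A] [HasFiniteLimits B]
    [PreservesFiniteLimits R] : PreservesFiniteLimits (Comma.fst L R) where
  preservesFiniteLimits _ _ _ :=
    { preservesLimit := preservesLimit_of_preserves_limit_cone
        (Comma.coneOfPreservesIsLimit _ (limit.isLimit _) (limit.isLimit _)) (limit.isLimit _) }

end CommaCategory

/-- The category `K` of triples `(X₂, X₁, X₂ ⟶ F X₁)`, viewed as the gluing of `A₁` (the open part)
and `A₂` (the closed part) along `F`; the functors below are named as in a recollement. -/
abbrev ArtinGluing {A₁ : Type u₁} [Category.{v₁} A₁] {A₂ : Type u₂} [Category.{v₂} A₂]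
    (F : A₁ ⥤ A₂) : Type _ :=
  Comma (𝟭 A₂) F

namespace ArtinGluing

variable {A₁ : Type u₁} [Category.{v₁} A₁] {A₂ : Type u₂} [Category.{v₂} A₂] (F : A₁ ⥤ A₂)

/-- The functor `j_*`, sending `Y` to `(F Y, Y, 𝟙)`. -/
def jStar : A₁ ⥤ ArtinGluing F where
  obj Y := { left := F.obj Y, right := Y, hom := 𝟙 _ }
  map f := { left := F.map f, right := f }

/-- The adjunction `j^* ⊣ j_*`, where `j^*` is the second projection. -/
def sndAdjJStar : Comma.snd (𝟭 A₂) F ⊣ jStar F :=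
  Adjunction.mkOfHomEquiv
    { homEquiv X Y :=
        { toFun g := { left := X.hom ≫ F.map g, right := g, w := Category.comp_id _ }
          invFun f := f.right
          left_inv _ := rfl
          right_inv f := by
            ext
            · exact f.w.symm.trans (Category.comp_id f.left)
            · rfl }
      homEquiv_naturality_right {X _ _} g h := by
        ext
        · exact (congrArg (X.hom ≫ ·) (F.map_comp g h)).trans (Category.assoc _ _ _).symm
        · rfl }

instance : (Comma.snd (𝟭 A₂) F).IsLeftAdjoint := (sndAdjJStar F).isLeftAdjoint

section ExtensionByZero

variable [HasZeroMorphisms A₂] [HasZeroObject A₂]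

/-- The extension by zero `j_!`, sending `Y` to `(0, Y, 0)`. -/
noncomputable def jShriek : A₁ ⥤ ArtinGluing F where
  obj Y := { left := 0, right := Y, hom := 0 }
  map f := { left := 0, right := f }

/-- The adjunction `j_! ⊣ j^*`, where `j^*` is the second projection. -/
noncomputable def jShriekAdjSnd : jShriek F ⊣ Comma.snd (𝟭 A₂) F :=
  Adjunction.mkOfHomEquiv
    { homEquiv Y X :=
        { toFun f := f.right
          invFun g := { left := 0, right := g, w := HasZeroObject.from_zero_ext _ _ }
          left_inv f := by
            ext
            · exact HasZeroObject.from_zero_ext _ _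
            · rfl }
      homEquiv_naturality_left_symm _ _ := by
        ext
        · exact HasZeroObject.from_zero_ext _ _
        · rfl }

instance : (jShriek F).IsLeftAdjoint := (jShriekAdjSnd F).isLeftAdjoint

instance : (Comma.snd (𝟭 A₂) F).IsRightAdjoint := (jShriekAdjSnd F).isRightAdjoint

instance : (jShriek F).PreservesMonomorphisms where
  preserves f _ :=
    have : Mono ((jShriek F).map f).left := inferInstanceAs (Mono (0 : (0 : A₂) ⟶ 0))
    have : Mono ((jShriek F).map f).right := inferInstanceAs (Mono f)
    comma_mono_of_mono_left_right _

instance : (Comma.snd (𝟭 A₂) F).PreservesInjectiveObjects :=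
  Functor.preservesInjectiveObjects_of_adjunction_of_preservesMonomorphisms (jShriekAdjSnd F)

instance : (jStar F).PreservesInjectiveObjects :=
  Functor.preservesInjectiveObjects_of_adjunction_of_preservesMonomorphisms (sndAdjJStar F)

/-- To extend `g : A ⟶ X.left` along `f : A ⟶ B`, first extend `g ≫ X.hom` to `e : B ⟶ F X.right`,
which is possible as `F X.right` is injective; `e` makes `(B, X.right)` an object of the gluing, and
`(g, 𝟙) : (A, X.right) ⟶ X` extends to it. -/
instance [F.PreservesInjectiveObjects] : (Comma.fst (𝟭 A₂) F).PreservesInjectiveObjects where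
  injective_obj {X} hX :=
    { factors {A B} g f _ := by
        have : Injective X.right := (Comma.snd (𝟭 A₂) F).injective_obj X
        let e : B ⟶ F.obj X.right := Injective.factorThru (g ≫ X.hom) f
        have he : f ≫ e = g ≫ X.hom := Injective.comp_factorThru _ _
        let A' : ArtinGluing F := { left := A, right := X.right, hom := g ≫ X.hom }
        let B' : ArtinGluing F := { left := B, right := X.right, hom := e }
        let f' : A' ⟶ B' := { left := f, right := 𝟙 _, w := by simpa [A', B'] using he }
        let g' : A' ⟶ X := { left := g, right := 𝟙 _, w := by simp [A'] }
        have : Mono f'.left := inferInstanceAs (Mono f)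
        have : Mono f'.right := inferInstanceAs (Mono (𝟙 X.right))
        have : Mono f' := comma_mono_of_mono_left_right f'
        exact ⟨(Injective.factorThru g' f').left,
          congrArg CommaMorphism.left (Injective.comp_factorThru g' f')⟩ }

end ExtensionByZero

section ClosedPart

variable [HasZeroMorphisms A₁] [HasZeroObject A₁] [HasZeroMorphisms A₂]

/-- The inclusion `i_*`, sending `Y` to `(Y, 0, 0)`. -/
noncomputable def iStar : A₂ ⥤ ArtinGluing F where
  obj Y := { left := Y, right := 0, hom := 0 }
  map f := { left := f, right := 0 }

instance : (iStar F).PreservesEpimorphisms where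
  preserves f _ :=
    have : Epi ((iStar F).map f).left := inferInstanceAs (Epi f)
    have : Epi ((iStar F).map f).right := inferInstanceAs (Epi (0 : (0 : A₁) ⟶ 0))
    comma_epi_of_epi_left_right _

variable [F.PreservesZeroMorphisms]

/-- The adjunction `i^* ⊣ i_*`, where `i^*` is the first projection. -/
noncomputable def fstAdjIStar : Comma.fst (𝟭 A₂) F ⊣ iStar F :=
  Adjunction.mkOfHomEquiv
    { homEquiv X Y :=
        { toFun g :=
            { left := g, right := 0, w := (F.map_isZero (isZero_zero A₁)).eq_of_tgt _ _ }
          invFun f := f.left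
          right_inv f := by
            ext
            · rfl
            · exact HasZeroObject.to_zero_ext _ _ }
      homEquiv_naturality_right _ _ := by
        ext
        · rfl
        · exact HasZeroObject.to_zero_ext _ _ }

instance : (Comma.fst (𝟭 A₂) F).IsLeftAdjoint := (fstAdjIStar F).isLeftAdjoint

instance : (iStar F).IsRightAdjoint := (fstAdjIStar F).isRightAdjoint

instance [(Comma.fst (𝟭 A₂) F).PreservesMonomorphisms] : (iStar F).PreservesInjectiveObjects :=
  Functor.preservesInjectiveObjects_of_adjunction_of_preservesMonomorphisms (fstAdjIStar F)

end ClosedPart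

variable {F} [Abelian A₁] [Abelian A₂] [PreservesFiniteLimits F]

instance [EnoughInjectives A₁] [EnoughInjectives A₂] : EnoughInjectives (ArtinGluing F) where
  presentation X := by
    let toOpen : X ⟶ (jStar F).obj (Injective.under X.right) :=
      { left := X.hom ≫ F.map (Injective.ι X.right)
        right := Injective.ι X.right
        w := Category.comp_id _ }
    let toClosed : X ⟶ (iStar F).obj (Injective.under X.left) :=
      { left := Injective.ι X.left
        right := 0
        w := (F.map_isZero (isZero_zero A₁)).eq_of_tgt _ _ }
    let f := prod.lift toOpen toClosed
    have hleft : f.left ≫ (prod.snd : _ ⨯ (iStar F).obj _ ⟶ _).left = toClosed.left :=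
      congrArg CommaMorphism.left (prod.lift_snd toOpen toClosed)
    have hright : f.right ≫ (prod.fst : (jStar F).obj _ ⨯ _ ⟶ _).right = toOpen.right :=
      congrArg CommaMorphism.right (prod.lift_fst toOpen toClosed)
    have : Mono toClosed.left := Injective.ι_mono X.left
    have : Mono toOpen.right := Injective.ι_mono X.right
    have : Mono f.left := mono_of_mono_fac hleft
    have : Mono f.right := mono_of_mono_fac hright
    have : Mono f := comma_mono_of_mono_left_right f
    exact ⟨{ J := _, f := f }⟩

variable [Abelian (ArtinGluing F)]

lemma shortExact_of_map_fst_of_map_snd {S : ShortComplex (ArtinGluing F)}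
    (hfst : (S.map (Comma.fst (𝟭 A₂) F)).ShortExact)
    (hsnd : (S.map (Comma.snd (𝟭 A₂) F)).ShortExact) : S.ShortExact where
  exact := S.exact_of_f_is_kernel <| Comma.fstSndJointlyReflectLimit
    ((KernelFork.isLimitMapConeEquiv _ (Comma.fst (𝟭 A₂) F)).symm hfst.fIsKernel)
    ((KernelFork.isLimitMapConeEquiv _ (Comma.snd (𝟭 A₂) F)).symm hsnd.fIsKernel)
  mono_f :=
    have : Mono S.f.left := hfst.mono_f
    have : Mono S.f.right := hsnd.mono_f
    comma_mono_of_mono_left_right S.f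
  epi_g :=
    have : Epi S.g.left := hfst.epi_g
    have : Epi S.g.right := hsnd.epi_g
    comma_epi_of_epi_left_right S.g

instance : (jShriek F).PreservesHomology :=
  Functor.preservesHomology_of_preservesMonos_and_cokernels _

instance : (iStar F).PreservesHomology :=
  Functor.preservesHomology_of_preservesEpis_and_kernels _

/-- The localization sequence `j_! j^* X ⟶ X ⟶ i_* i^* X`. -/
noncomputable def localizationSequence (X : ArtinGluing F) : ShortComplex (ArtinGluing F) where
  X₁ := (jShriek F).obj X.right
  X₂ := X
  X₃ := (iStar F).obj X.left
  f := { left := 0, right := 𝟙 X.right, w := HasZeroObject.from_zero_ext _ _ }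
  g := { left := 𝟙 X.left, right := 0, w := (F.map_isZero (isZero_zero A₁)).eq_of_tgt _ _ }
  zero := by
    ext
    · exact HasZeroObject.from_zero_ext _ _
    · exact HasZeroObject.to_zero_ext _ _

lemma localizationSequence_shortExact (X : ArtinGluing F) :
    (localizationSequence X).ShortExact :=
  shortExact_of_map_fst_of_map_snd
    (ShortComplex.Splitting.ofIsZeroOfIsIso _ (isZero_zero A₂)
      (show IsIso (𝟙 X.left) from inferInstance)).shortExact
    (ShortComplex.Splitting.ofIsIsoOfIsZero _ (show IsIso (𝟙 X.right) from inferInstance)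
      (isZero_zero A₁)).shortExact

lemma hasInjectiveDimensionLE_one_jShriek_obj [F.PreservesInjectiveObjects] (E : A₁)
    [Injective E] : HasInjectiveDimensionLE ((jShriek F).obj E) 1 :=
  ((localizationSequence_shortExact ((jStar F).obj E)).hasInjectiveDimensionLT_X₃_iff 0
    ((jStar F).injective_obj E)).1
    (inferInstanceAs (HasInjectiveDimensionLE ((iStar F).obj (F.obj E)) 0))

variable [EnoughInjectives A₁] [EnoughInjectives A₂] {X : ArtinGluing F} {d : ℕ}

lemma hasInjectiveDimensionLE_right (hX : HasInjectiveDimensionLE X d) :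
    HasInjectiveDimensionLE X.right d :=
  hasInjectiveDimensionLE_obj (Comma.snd (𝟭 A₂) F) hX

variable [F.PreservesInjectiveObjects]

lemma hasInjectiveDimensionLE_left (hX : HasInjectiveDimensionLE X d) :
    HasInjectiveDimensionLE X.left d :=
  hasInjectiveDimensionLE_obj (Comma.fst (𝟭 A₂) F) hX

lemma hasInjectiveDimensionLE_of_right_of_left (hright : HasInjectiveDimensionLE X.right d)
    (hleft : HasInjectiveDimensionLE X.left (d + 1)) : HasInjectiveDimensionLE X (d + 1) :=
  (localizationSequence_shortExact X).hasInjectiveDimensionLT_X₂ _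
    (hasInjectiveDimensionLE_obj_add (jShriek F)
      (fun E _ ↦ hasInjectiveDimensionLE_one_jShriek_obj E) hright)
    (hasInjectiveDimensionLE_obj (iStar F) hleft)

end ArtinGluing

theorem stmt_6 {A₁ : Type u₁} [Category.{v₁} A₁] [Abelian A₁] [EnoughInjectives A₁]
    {A₂ : Type u₂} [Category.{v₂} A₂] [Abelian A₂] [EnoughInjectives A₂]
    (F : A₁ ⥤ A₂) [F.Additive] [PreservesFiniteLimits F]
    [Abelian (Comma (𝟭 A₂) F)]
    (hF : ∀ E : A₁, Injective E → Injective (F.obj E)) (d : ℕ) :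
    (((∀ X : A₁, InjDimLE d X) ∧ (∀ X : A₂, InjDimLE d X)) →
        ∀ X : Comma (𝟭 A₂) F, InjDimLE (d + 1) X) ∧
      ((∀ X : Comma (𝟭 A₂) F, InjDimLE d X) →
        ((∀ X : A₁, InjDimLE d X) ∧ (∀ X : A₂, InjDimLE d X))) := by
  have : F.PreservesInjectiveObjects := ⟨fun {E} hE ↦ hF E hE⟩
  simp only [injDimLE_iff_hasInjectiveDimensionLE]
  refine ⟨fun ⟨h₁, h₂⟩ X ↦ ?_, fun h ↦ ⟨fun Y ↦ ?_, fun Y ↦ ?_⟩⟩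
  · have := h₂ X.left
    exact ArtinGluing.hasInjectiveDimensionLE_of_right_of_left (h₁ X.right) inferInstance
  · exact ArtinGluing.hasInjectiveDimensionLE_right (h ((ArtinGluing.jShriek F).obj Y))
  · exact ArtinGluing.hasInjectiveDimensionLE_left (h ((ArtinGluing.iStar F).obj Y))
end

section
/- The comma category K = Comma(𝟭_{A₂}, F₁₂) is hereditary if and only if the following three conditions hold: (a) F₁₂ sends every injective object of A₁ to an injective object of A₂; (b) A₁ and A₂ are hereditary; (c) for every epimorphism p : E₁ ⟶ E₁' between injective objects of A₁, the morphism F₁₂(p) is a split epimorphism. -/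
/-!
STATEMENT 7: The comma category `K = Comma(𝟭 A₂, F₁₂)` is hereditary if and only if
(a) `F₁₂` preserves injectives, (b) `A₁` and `A₂` are hereditary, and (c) `F₁₂(p)` is
a split epimorphism for every epimorphism `p` between injective objects of `A₁`.
-/

open CategoryTheory Limits

universe v₁ v₂ u₁ u₂

/-- A category is hereditary if for every epimorphism `e : E ⟶ X` with `E` injective,
`X` is also injective. -/
def Hereditary (C : Type*) [CategoryTheory.Category C] : Prop :=
  ∀ ⦃E X : C⦄ (e : E ⟶ X), CategoryTheory.Epi e →
    CategoryTheory.Injective E → CategoryTheory.Injective X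

/-!
An object `X` of the comma category with `F X₁` injective is injective if and only if `X₁` and `X₂`
are injective and `d_X` is a split epimorphism.

If the comma category is hereditary and `e : E₁ ⟶ Y₁` is an epimorphism from an injective object,
then `(F E₁, Y₁, F e)` is a quotient of the injective object `(F E₁, E₁, 𝟙)`, hence injective. This
makes `Y₁` injective and `F e` split, and for `Y₁ = 0` it makes `F E₁` injective. The category `A₂`
is treated through the objects `(X₂, 0, 0)`. Conversely, the three conditions pass the above
criterion from `E` to any quotient `X`: composing the splittings of `d_E` and of `F e₁` splits
`d_X ∘ e₂`, hence `d_X`.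
-/

namespace HereditaryComma

section Category

variable {C : Type*} [Category* C]

lemma injective_of_isTerminal {X : C} (hX : IsTerminal X) : Injective X where
  factors _ _ _ := ⟨hX.from _, hX.hom_ext _ _⟩

lemma isSplitEpi_of_isSplitEpi_comp {X Y Z : C} (f : X ⟶ Y) (g : Y ⟶ Z)
    [IsSplitEpi (f ≫ g)] : IsSplitEpi g :=
  IsSplitEpi.mk' ⟨section_ (f ≫ g) ≫ f, by rw [Category.assoc, IsSplitEpi.id]⟩

end Category

section GeneralComma

variable {A B T : Type*} [Category* A] [Category* B] [Category* T] {L : A ⥤ T} {R : B ⥤ T}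

lemma mono_of_mono_left_of_mono_right {X Y : Comma L R} (f : X ⟶ Y) [Mono f.left]
    [Mono f.right] : Mono f where
  right_cancellation g h eq := by
    ext
    · rw [← cancel_mono f.left, ← Comma.comp_left, eq, Comma.comp_left]
    · rw [← cancel_mono f.right, ← Comma.comp_right, eq, Comma.comp_right]

lemma epi_of_epi_left_of_epi_right {X Y : Comma L R} (f : X ⟶ Y) [Epi f.left]
    [Epi f.right] : Epi f where
  left_cancellation g h eq := by
    ext
    · rw [← cancel_epi f.left, ← Comma.comp_left, eq, Comma.comp_left]
    · rw [← cancel_epi f.right, ← Comma.comp_right, eq, Comma.comp_right]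

variable (L R)

/-- The functor `Y ↦ (⊥, Y, !)`, left adjoint to the projection `Comma.snd`. -/
noncomputable def rightInclusion [HasInitial A] [PreservesColimit (Functor.empty.{0} A) L] :
    B ⥤ Comma L R where
  obj Y :=
    { left := ⊥_ A
      right := Y
      hom := (initialIsInitial.isInitialObj L _).to _ }
  map g :=
    { left := 𝟙 _
      right := g
      w := (initialIsInitial.isInitialObj L _).hom_ext _ _ }

/-- The adjunction between the inclusion `Y ↦ (⊥, Y, !)` and the projection `Comma.snd`. -/
noncomputable def rightInclusionAdjSnd [HasInitial A]
    [PreservesColimit (Functor.empty.{0} A) L] : rightInclusion L R ⊣ Comma.snd L R :=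
  Adjunction.mkOfHomEquiv
    { homEquiv _ X :=
        { toFun f := f.right
          invFun g :=
            { left := initial.to X.left
              right := g
              w := (initialIsInitial.isInitialObj L _).hom_ext _ _ }
          left_inv _ := Comma.hom_ext _ _ (initial.hom_ext _ _) rfl
          right_inv _ := rfl }
      homEquiv_naturality_left_symm _ _ := Comma.hom_ext _ _ (initial.hom_ext _ _) rfl
      homEquiv_naturality_right _ _ := rfl }

instance preservesMonomorphisms_snd [HasInitial A] [PreservesColimit (Functor.empty.{0} A) L] :
    (Comma.snd L R).PreservesMonomorphisms :=
  Functor.preservesMonomorphisms_of_adjunction (rightInclusionAdjSnd L R)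

instance preservesInjectiveObjects_snd [HasInitial A]
    [PreservesColimit (Functor.empty.{0} A) L] : (Comma.snd L R).PreservesInjectiveObjects :=
  have : (rightInclusion L R).PreservesMonomorphisms :=
    ⟨fun g _ ↦
      have : Mono ((rightInclusion L R).map g).left := inferInstanceAs (Mono (𝟙 _))
      have : Mono ((rightInclusion L R).map g).right := ‹Mono g›
      mono_of_mono_left_of_mono_right _⟩
  Functor.preservesInjectiveObjects_of_adjunction_of_preservesMonomorphisms
    (rightInclusionAdjSnd L R)

/-- The functor `X ↦ (X, ⊤, !)`, right adjoint to the projection `Comma.fst`. -/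
noncomputable def leftInclusion [HasTerminal B] [PreservesLimit (Functor.empty.{0} B) R] :
    A ⥤ Comma L R where
  obj X :=
    { left := X
      right := ⊤_ B
      hom := (terminalIsTerminal.isTerminalObj R _).from _ }
  map f :=
    { left := f
      right := 𝟙 _
      w := (terminalIsTerminal.isTerminalObj R _).hom_ext _ _ }

/-- The adjunction between the projection `Comma.fst` and the inclusion `X ↦ (X, ⊤, !)`. -/
noncomputable def fstAdjLeftInclusion [HasTerminal B] [PreservesLimit (Functor.empty.{0} B) R] :
    Comma.fst L R ⊣ leftInclusion L R :=
  Adjunction.mkOfHomEquiv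
    { homEquiv X _ :=
        { toFun f :=
            { left := f
              right := terminal.from X.right
              w := (terminalIsTerminal.isTerminalObj R _).hom_ext _ _ }
          invFun g := g.left
          left_inv _ := rfl
          right_inv _ := Comma.hom_ext _ _ rfl (terminal.hom_ext _ _) }
      homEquiv_naturality_left_symm _ _ := rfl
      homEquiv_naturality_right _ _ := Comma.hom_ext _ _ rfl (terminal.hom_ext _ _) }

instance preservesEpimorphisms_fst [HasTerminal B] [PreservesLimit (Functor.empty.{0} B) R] :
    (Comma.fst L R).PreservesEpimorphisms :=
  Functor.preservesEpimorphisms_of_adjunction (fstAdjLeftInclusion L R)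

instance preservesEpimorphisms_leftInclusion [HasTerminal B]
    [PreservesLimit (Functor.empty.{0} B) R] : (leftInclusion L R).PreservesEpimorphisms :=
  ⟨fun f _ ↦
    have : Epi ((leftInclusion L R).map f).left := ‹Epi f›
    have : Epi ((leftInclusion L R).map f).right := inferInstanceAs (Epi (𝟙 _))
    epi_of_epi_left_of_epi_right _⟩

instance preservesMonomorphisms_fst [HasInitial A] [PreservesColimit (Functor.empty.{0} A) L]
    [R.PreservesMonomorphisms] : (Comma.fst L R).PreservesMonomorphisms where
  preserves {X Y} f _ := by
    have : Mono f.right := (Comma.snd L R).map_mono f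
    refine ⟨fun {Z} a b (eq : a ≫ f.left = b ≫ f.left) ↦ ?_⟩
    have hom_eq : L.map b ≫ X.hom = L.map a ≫ X.hom := by
      rw [← cancel_mono (R.map f.right), Category.assoc, Category.assoc, ← f.w,
        ← L.map_comp_assoc, ← L.map_comp_assoc, eq]
    let W : Comma L R := ⟨Z, X.right, L.map a ≫ X.hom⟩
    let α : W ⟶ X := { left := a, right := 𝟙 _ }
    let β : W ⟶ X := { left := b, right := 𝟙 _, w := by simpa [W] using hom_eq }
    have αβ : α = β := (cancel_mono f).1 (Comma.hom_ext _ _ eq rfl)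
    exact congrArg CommaMorphism.left αβ

instance preservesInjectiveObjects_leftInclusion [HasInitial A]
    [PreservesColimit (Functor.empty.{0} A) L] [R.PreservesMonomorphisms] [HasTerminal B]
    [PreservesLimit (Functor.empty.{0} B) R] : (leftInclusion L R).PreservesInjectiveObjects :=
  Functor.preservesInjectiveObjects_of_adjunction_of_preservesMonomorphisms
    (fstAdjLeftInclusion L R)

end GeneralComma

section IdentityComma

variable {A₁ : Type u₁} [Category.{v₁} A₁] {A₂ : Type u₂} [Category.{v₂} A₂]

/-- The functor `Y ↦ (F Y, Y, 𝟙)`, right adjoint to the projection `Comma.snd`. -/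
def graph (F : A₁ ⥤ A₂) : A₁ ⥤ Comma (𝟭 A₂) F where
  obj Y := { left := F.obj Y, right := Y, hom := 𝟙 _ }
  map g := { left := F.map g, right := g }

/-- The adjunction between the projection `Comma.snd` and the functor `Y ↦ (F Y, Y, 𝟙)`. -/
def sndAdjGraph (F : A₁ ⥤ A₂) : Comma.snd (𝟭 A₂) F ⊣ graph F :=
  Adjunction.mkOfHomEquiv
    { homEquiv X _ :=
        { toFun g := { left := X.hom ≫ F.map g, right := g, w := Category.comp_id _ }
          invFun f := f.right
          left_inv _ := rfl
          right_inv f := Comma.hom_ext _ _ (f.w.symm.trans (Category.comp_id _)) rfl }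
      homEquiv_naturality_left_symm _ _ := rfl
      homEquiv_naturality_right f g :=
        Comma.hom_ext _ _ ((_ ≫= F.map_comp f g).trans (Category.assoc _ _ _).symm) rfl }

variable {F : A₁ ⥤ A₂}

instance preservesEpimorphisms_snd : (Comma.snd (𝟭 A₂) F).PreservesEpimorphisms :=
  Functor.preservesEpimorphisms_of_adjunction (sndAdjGraph F)

instance preservesInjectiveObjects_graph [HasInitial A₂] :
    (graph F).PreservesInjectiveObjects :=
  Functor.preservesInjectiveObjects_of_adjunction_of_preservesMonomorphisms (sndAdjGraph F)

lemma injective_left (X : Comma (𝟭 A₂) F) [Injective X] (hF : Injective (F.obj X.right)) :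
    Injective X.left where
  factors {A B} g f _ := by
    let d : X.left ⟶ F.obj X.right := X.hom
    let P : Comma (𝟭 A₂) F := ⟨A, X.right, g ≫ d⟩
    let Q : Comma (𝟭 A₂) F := ⟨B, X.right, Injective.factorThru (g ≫ d) f⟩
    let φ : P ⟶ Q := { left := f, right := 𝟙 _, w := by simp [P, Q] }
    let γ : P ⟶ X := { left := g, right := 𝟙 _, w := by simp [P, d] }
    have : Mono φ.left := ‹Mono f›
    have : Mono φ.right := inferInstanceAs (Mono (𝟙 _))
    have : Mono φ := mono_of_mono_left_of_mono_right φ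
    exact ⟨(Injective.factorThru γ φ).left,
      congrArg CommaMorphism.left (Injective.comp_factorThru γ φ)⟩

-- The graph of `X.hom` embeds `X` into `(X.left ⊞ F X.right, X.right, snd)`, whose structure
-- morphism splits; a retraction of this embedding carries the splitting over to `X`.
lemma isSplitEpi_hom_of_injective [HasZeroMorphisms A₂] [HasBinaryBiproducts A₂]
    (X : Comma (𝟭 A₂) F) [Injective X] : IsSplitEpi X.hom := by
  let d : X.left ⟶ F.obj X.right := X.hom
  let Y : Comma (𝟭 A₂) F := ⟨X.left ⊞ F.obj X.right, X.right, biprod.snd⟩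
  let m : X ⟶ Y := { left := biprod.lift (𝟙 _) d, right := 𝟙 _, w := by simp [Y, d] }
  have : Mono m.left := mono_of_mono_fac (biprod.lift_fst (𝟙 _) d)
  have : Mono m.right := inferInstanceAs (Mono (𝟙 _))
  have : Mono m := mono_of_mono_left_of_mono_right m
  let r : Y ⟶ X := Injective.factorThru (𝟙 X) m
  have r_right : r.right = 𝟙 X.right :=
    (Category.id_comp _).symm.trans
      (congrArg CommaMorphism.right (Injective.comp_factorThru (𝟙 X) m))
  have r_w : r.left ≫ d = biprod.snd := by
    simpa [r_right, Y] using r.w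
  have inr_r_w : (biprod.inr ≫ r.left) ≫ d = 𝟙 _ := by
    rw [Category.assoc, r_w, biprod.inr_snd]
  exact ⟨⟨⟨biprod.inr ≫ r.left, inr_r_w⟩⟩⟩

variable [Preadditive A₂] [HasInitial A₂] [F.PreservesMonomorphisms]

-- Extensions `h` and `k` of the two components need not be compatible with the structure
-- morphisms; a section of `X.hom` lifts the defect, which is then subtracted from `k`.
lemma injective_of_isSplitEpi_hom (X : Comma (𝟭 A₂) F) [Injective X.right] [Injective X.left]
    [IsSplitEpi X.hom] : Injective X where
  factors {A B} g f _ := by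
    have : Mono f.right := (Comma.snd (𝟭 A₂) F).map_mono f
    have : Mono f.left := (Comma.fst (𝟭 A₂) F).map_mono f
    let h : B.right ⟶ X.right := Injective.factorThru g.right f.right
    let k : B.left ⟶ X.left := Injective.factorThru g.left f.left
    have f_h : f.right ≫ h = g.right := Injective.comp_factorThru _ _
    have f_k : f.left ≫ k = g.left := Injective.comp_factorThru _ _
    let d : X.left ⟶ F.obj X.right := X.hom
    let b : B.left ⟶ F.obj B.right := B.hom
    let s : F.obj X.right ⟶ X.left := section_ X.hom
    have s_d : s ≫ d = 𝟙 _ := IsSplitEpi.id X.hom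
    let defect : B.left ⟶ F.obj X.right := k ≫ d - b ≫ F.map h
    have f_defect : f.left ≫ defect = 0 := by
      have f_w : f.left ≫ b = A.hom ≫ F.map f.right := f.w
      have g_w : g.left ≫ d = A.hom ≫ F.map g.right := g.w
      rw [Preadditive.comp_sub, reassoc_of% f_k, g_w, reassoc_of% f_w, ← F.map_comp, f_h,
        sub_self]
    refine ⟨{ left := k - defect ≫ s, right := h, w := ?_ }, Comma.hom_ext _ _ ?_ f_h⟩
    · change (k - defect ≫ s) ≫ d = b ≫ F.map h
      rw [Preadditive.sub_comp, Category.assoc, s_d, Category.comp_id, sub_sub_cancel]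
    · change f.left ≫ (k - defect ≫ s) = g.left
      rw [Preadditive.comp_sub, reassoc_of% f_defect, zero_comp, sub_zero, f_k]

theorem injective_iff [HasBinaryBiproducts A₂] (X : Comma (𝟭 A₂) F)
    (hF : Injective (F.obj X.right)) :
    Injective X ↔ Injective X.right ∧ Injective X.left ∧ IsSplitEpi X.hom :=
  ⟨fun _ ↦ ⟨(Comma.snd (𝟭 A₂) F).injective_obj X, injective_left X hF,
      isSplitEpi_hom_of_injective X⟩,
    fun ⟨_, _, _⟩ ↦ injective_of_isSplitEpi_hom X⟩

end IdentityComma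

section Hereditary

variable {A₁ : Type u₁} [Category.{v₁} A₁] {A₂ : Type u₂} [Category.{v₂} A₂] {F : A₁ ⥤ A₂}

lemma injective_mk_map_of_hereditary [HasInitial A₂] (H : Hereditary (Comma (𝟭 A₂) F))
    {E X : A₁} (e : E ⟶ X) [Epi e] [Injective E] :
    Injective (⟨F.obj E, X, F.map e⟩ : Comma (𝟭 A₂) F) := by
  let q : (graph F).obj E ⟶ ⟨F.obj E, X, F.map e⟩ := { left := 𝟙 (F.obj E), right := e }
  have : Epi q.left := inferInstanceAs (Epi (𝟙 _))
  have : Epi q.right := ‹Epi e›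
  exact H q (epi_of_epi_left_of_epi_right q) inferInstance

lemma hereditary_right [HasInitial A₂] (H : Hereditary (Comma (𝟭 A₂) F)) : Hereditary A₁ :=
  fun _ _ e _ _ ↦
    (Comma.snd (𝟭 A₂) F).injective_obj_of_injective (injective_mk_map_of_hereditary H e)

lemma hereditary_left [HasInitial A₂] [HasTerminal A₁]
    [PreservesLimit (Functor.empty.{0} A₁) F] [F.PreservesMonomorphisms]
    (H : Hereditary (Comma (𝟭 A₂) F)) : Hereditary A₂ := fun _ X e _ _ ↦
  have : Injective ((leftInclusion (𝟭 A₂) F).obj X) :=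
    H ((leftInclusion (𝟭 A₂) F).map e) inferInstance inferInstance
  injective_left ((leftInclusion (𝟭 A₂) F).obj X)
    (injective_of_isTerminal (terminalIsTerminal.isTerminalObj F _))

open scoped ZeroObject in
lemma injective_obj_of_hereditary [HasInitial A₂] [HasZeroObject A₁]
    [PreservesLimit (Functor.empty.{0} A₁) F] (H : Hereditary (Comma (𝟭 A₂) F))
    (E : A₁) [Injective E] : Injective (F.obj E) :=
  let e : E ⟶ 0 := (isZero_zero A₁).from_ E
  have : Epi e := (isZero_zero A₁).epi e
  have : Injective (⟨F.obj E, 0, F.map e⟩ : Comma (𝟭 A₂) F) := injective_mk_map_of_hereditary H e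
  injective_left ⟨F.obj E, 0, F.map e⟩
    (injective_of_isTerminal ((isZero_zero A₁).isTerminal.isTerminalObj F _))

lemma isSplitEpi_map_of_hereditary [HasInitial A₂] [HasZeroMorphisms A₂]
    [HasBinaryBiproducts A₂] (H : Hereditary (Comma (𝟭 A₂) F)) {E X : A₁} (e : E ⟶ X)
    [Epi e] [Injective E] : IsSplitEpi (F.map e) :=
  have := injective_mk_map_of_hereditary H e
  isSplitEpi_hom_of_injective ⟨F.obj E, X, F.map e⟩

lemma hereditary_of_isSplitEpi_map [Preadditive A₂] [HasInitial A₂] [HasBinaryBiproducts A₂]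
    [HasTerminal A₁] [PreservesLimit (Functor.empty.{0} A₁) F] [F.PreservesMonomorphisms]
    (hF : ∀ E : A₁, Injective E → Injective (F.obj E))
    (h₁ : Hereditary A₁) (h₂ : Hereditary A₂)
    (hsplit : ∀ (E₁ E₁' : A₁) (p : E₁ ⟶ E₁'), Epi p → Injective E₁ → Injective E₁' →
      IsSplitEpi (F.map p)) :
    Hereditary (Comma (𝟭 A₂) F) := by
  intro E X e _ hE
  have epi_right : Epi e.right := (Comma.snd (𝟭 A₂) F).map_epi e
  have epi_left : Epi e.left := (Comma.fst (𝟭 A₂) F).map_epi e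
  have E_right : Injective E.right := (Comma.snd (𝟭 A₂) F).injective_obj E
  obtain ⟨-, E_left, _⟩ := (injective_iff E (hF _ E_right)).1 hE
  have X_right : Injective X.right := h₁ e.right epi_right E_right
  have X_left : Injective X.left := h₂ e.left epi_left E_left
  have X_hom : IsSplitEpi X.hom := by
    have : IsSplitEpi (F.map e.right) := hsplit _ _ e.right epi_right E_right X_right
    have : IsSplitEpi ((𝟭 A₂).map e.left ≫ X.hom) := by
      rw [e.w]
      infer_instance
    exact isSplitEpi_of_isSplitEpi_comp ((𝟭 A₂).map e.left) X.hom
  exact (injective_iff X (hF _ X_right)).2 ⟨X_right, X_left, X_hom⟩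

end Hereditary

end HereditaryComma

theorem stmt_7_general {A₁ : Type u₁} [Category.{v₁} A₁] [HasZeroObject A₁]
    {A₂ : Type u₂} [Category.{v₂} A₂] [Preadditive A₂] [HasZeroObject A₂] [HasBinaryBiproducts A₂]
    (F : A₁ ⥤ A₂) [PreservesLimit (Functor.empty.{0} A₁) F] [F.PreservesMonomorphisms] :
    Hereditary (Comma (𝟭 A₂) F) ↔
      ((∀ E : A₁, Injective E → Injective (F.obj E)) ∧
        (Hereditary A₁ ∧ Hereditary A₂) ∧
        (∀ (E₁ E₁' : A₁) (p : E₁ ⟶ E₁'), Epi p → Injective E₁ → Injective E₁' →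
          IsSplitEpi (F.map p))) :=
  ⟨fun H ↦
    ⟨fun E _ ↦ HereditaryComma.injective_obj_of_hereditary H E,
      ⟨HereditaryComma.hereditary_right H, HereditaryComma.hereditary_left H⟩,
      fun _ _ p _ _ _ ↦ HereditaryComma.isSplitEpi_map_of_hereditary H p⟩,
    fun ⟨hF, ⟨h₁, h₂⟩, hsplit⟩ ↦
      HereditaryComma.hereditary_of_isSplitEpi_map hF h₁ h₂ hsplit⟩

theorem stmt_7 {A₁ : Type u₁} [Category.{v₁} A₁] [Abelian A₁] [EnoughInjectives A₁]
    {A₂ : Type u₂} [Category.{v₂} A₂] [Abelian A₂] [EnoughInjectives A₂]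
    (F : A₁ ⥤ A₂) [F.Additive] [PreservesFiniteLimits F] :
    Hereditary (Comma (𝟭 A₂) F) ↔
      ((∀ E : A₁, Injective E → Injective (F.obj E)) ∧
        (Hereditary A₁ ∧ Hereditary A₂) ∧
        (∀ (E₁ E₁' : A₁) (p : E₁ ⟶ E₁'), Epi p → Injective E₁ → Injective E₁' →
          IsSplitEpi (F.map p))) :=
  stmt_7_general F
end

section
/- If E₁ is an injective object of A₁ and E₂ is an injective object of A₂, then the object G(E₁, E₂) = (F₁₂(E₁) ⊞ E₂, E₁, π), where π is the biproduct projection onto F₁₂(E₁), is an injective object of the comma category K = Comma(𝟭_{A₂}, F₁₂). -/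
/-!
STATEMENT 8: If `E₁` is injective in `A₁` and `E₂` is injective in `A₂`, then the
object `G(E₁, E₂) = (F₁₂(E₁) ⊞ E₂, E₁, π)` (with `π` the biproduct projection onto
`F₁₂(E₁)`) is an injective object of the comma category `K = Comma(𝟭 A₂, F₁₂)`.
-/

open CategoryTheory Limits

universe v₁ v₂ u₁ u₂

variable {A₁ : Type u₁} [Category.{v₁} A₁] [Abelian A₁] [EnoughInjectives A₁]
variable {A₂ : Type u₂} [Category.{v₂} A₂] [Abelian A₂] [EnoughInjectives A₂]
variable (F : A₁ ⥤ A₂)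

/-!
A morphism `X ⟶ G` into an object `G` whose structure map is one projection of a product
`G.left = F(G.right) ⨯ E` is the same as an arbitrary pair `X.right ⟶ G.right`, `X.left ⟶ E`.
Such a pair extends along a monomorphism of the comma category as soon as both components of the
latter are monomorphisms, which holds when `F` preserves monomorphisms.
-/

section Mono

variable {A B T : Type*} [Category* A] [Category* B] [Category* T] {L : A ⥤ T} {R : B ⥤ T}

theorem comma_mono_right_of_mono [HasInitial A] [PreservesColimit (Functor.empty.{0} A) L]
    {X Y : Comma L R} (f : X ⟶ Y) [Mono f] : Mono f.right where
  right_cancellation {Z} a b hab := by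
    have hL : IsInitial (L.obj (⊥_ A)) := initialIsInitial.isInitialObj L
    let W : Comma L R := ⟨⊥_ A, Z, hL.to _⟩
    let extend (c : Z ⟶ X.right) : W ⟶ X := ⟨initial.to _, c, hL.hom_ext _ _⟩
    have h : extend a ≫ f = extend b ≫ f := Comma.hom_ext _ _ rfl hab
    exact congrArg CommaMorphism.right ((cancel_mono f).1 h)

theorem comma_mono_left_of_mono {X Y : Comma L R} (f : X ⟶ Y) [Mono f] [Mono (R.map f.right)] :
    Mono f.left where
  right_cancellation {Z} a b hab := by
    have hX : L.map a ≫ X.hom = L.map b ≫ X.hom := by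
      rw [← cancel_mono (R.map f.right), Category.assoc, Category.assoc, ← f.w,
        ← L.map_comp_assoc, ← L.map_comp_assoc, hab]
    let W : Comma L R := ⟨Z, X.right, L.map a ≫ X.hom⟩
    let a' : W ⟶ X := { left := a, right := 𝟙 _ }
    let b' : W ⟶ X := { left := b, right := 𝟙 _, w := by simp [W, hX] }
    have h : a' ≫ f = b' ≫ f := Comma.hom_ext _ _ hab rfl
    exact congrArg CommaMorphism.left ((cancel_mono f).1 h)

end Mono

section Cofree

variable {A B : Type*} [Category* A] [Category* B] {R : B ⥤ A} {X G : Comma (𝟭 A) R} {E : A}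
  {s : G.left ⟶ E}

/-- The morphism `X ⟶ G` determined by its component `X.right ⟶ G.right` and a morphism
`X.left ⟶ E`, when `G.hom` and `s` exhibit `G.left` as a product of `R.obj G.right` and `E`. -/
def cofreeLift (hG : IsLimit (BinaryFan.mk G.hom s)) (r : X.right ⟶ G.right) (l : X.left ⟶ E) :
    X ⟶ G where
  left := hG.lift (BinaryFan.mk (X.hom ≫ R.map r) l)
  right := r
  w := hG.fac _ ⟨.left⟩

theorem cofreeLift_left_comp (hG : IsLimit (BinaryFan.mk G.hom s)) (r : X.right ⟶ G.right)
    (l : X.left ⟶ E) : (cofreeLift hG r l).left ≫ s = l :=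
  hG.fac _ ⟨.right⟩

theorem cofree_hom_ext (hG : IsLimit (BinaryFan.mk G.hom s)) {g g' : X ⟶ G}
    (hright : g.right = g'.right) (hleft : g.left ≫ s = g'.left ≫ s) : g = g' := by
  have hhom : g.left ≫ G.hom = g'.left ≫ G.hom :=
    calc
      g.left ≫ G.hom = X.hom ≫ R.map g.right := g.w
      _ = X.hom ≫ R.map g'.right := by rw [hright]
      _ = g'.left ≫ G.hom := g'.w.symm
  exact Comma.hom_ext _ _ (BinaryFan.IsLimit.hom_ext hG hhom hleft) hright

theorem stmt_8_general [HasInitial A] [R.PreservesMonomorphisms]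
    (hG : IsLimit (BinaryFan.mk G.hom s)) [Injective G.right] [Injective E] : Injective G where
  factors g f _ := by
    have := comma_mono_right_of_mono f
    have := comma_mono_left_of_mono f
    let r := Injective.factorThru g.right f.right
    let l := Injective.factorThru (g.left ≫ s) f.left
    refine ⟨cofreeLift hG r l, cofree_hom_ext hG (Injective.comp_factorThru g.right f.right) ?_⟩
    rw [Comma.comp_left, Category.assoc, cofreeLift_left_comp, Injective.comp_factorThru]

end Cofree

theorem stmt_8 [F.Additive] [PreservesFiniteLimits F]
    (E₁ : A₁) (E₂ : A₂) (h₁ : Injective E₁) (h₂ : Injective E₂) :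
    Injective (cofreeComodule F E₁ E₂) :=
  have : Injective (cofreeComodule F E₁ E₂).right := h₁
  stmt_8_general (BinaryBiproduct.isLimit (F.obj E₁) E₂)
end

section
/- If the comma category K = Comma(𝟭_{A₂}, F₁₂) is hereditary, then F₁₂ sends every injective object of A₁ to an injective object of A₂. -/
/-!
STATEMENT 9: If the comma category `K = Comma(𝟭 A₂, F₁₂)` is hereditary, then `F₁₂`
sends every injective object of `A₁` to an injective object of `A₂`.
-/

open CategoryTheory Limits

universe v₁ v₂ u₁ u₂

/-!
The functor `E ↦ (F E, E, 𝟙)` is right adjoint to the projection `K ⥤ A₁`. That projection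
preserves monomorphisms, being itself right adjoint to `Z ↦ (0, Z, 0)`, so `(F E, E, 𝟙)` is
injective in `K` whenever `E` is injective. Since `F 0` is terminal, `(𝟙, 0)` is an epimorphism
`(F E, E, 𝟙) ⟶ (F E, 0, 0)`, and heredity makes `(F E, 0, 0)` injective. Finally
`Y ↦ (Y, 0, 0)` is a fully faithful right adjoint of the projection `K ⥤ A₂`, hence reflects
injectivity, and `F E` is injective.
-/

section CommaAdjunctions

variable {A B T : Type*} [Category* A] [Category* B] [Category* T]

/-- The embedding `Z ↦ (a, Z, L a ⟶ R Z)` of `B` into a comma category, for an object `a` with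
`L a` initial. It is the left adjoint of `Comma.snd` when `a` is initial. -/
def commaInr (L : A ⥤ T) (R : B ⥤ T) {a : A} (hLa : IsInitial (L.obj a)) : B ⥤ Comma L R where
  obj Z := ⟨a, Z, hLa.to _⟩
  map f := { left := 𝟙 a, right := f, w := hLa.hom_ext _ _ }

/-- The embedding `Y ↦ (Y, b, L Y ⟶ R b)` of `A` into a comma category, for an object `b` with
`R b` terminal. It is the right adjoint of `Comma.fst` when `b` is terminal. -/
def commaInl (L : A ⥤ T) (R : B ⥤ T) {b : B} (hRb : IsTerminal (R.obj b)) : A ⥤ Comma L R where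
  obj Y := ⟨Y, b, hRb.from _⟩
  map f := { left := f, right := 𝟙 b, w := hRb.hom_ext _ _ }

/-- The functor `E ↦ (R E, E, 𝟙)`, the right adjoint of `Comma.snd (𝟭 T) R`. -/
def commaGraph (R : B ⥤ T) : B ⥤ Comma (𝟭 T) R where
  obj E := ⟨R.obj E, E, 𝟙 _⟩
  map f := { left := R.map f, right := f }

/-- The adjunction identifying morphisms `(a, Z, L a ⟶ R Z) ⟶ X` with morphisms `Z ⟶ X.right`. -/
def commaInrAdjSnd (L : A ⥤ T) (R : B ⥤ T) {a : A} (ha : IsInitial a)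
    (hLa : IsInitial (L.obj a)) : commaInr L R hLa ⊣ Comma.snd L R :=
  Adjunction.mkOfHomEquiv
    { homEquiv _ X :=
        { toFun f := f.right
          invFun g := { left := ha.to X.left, right := g, w := hLa.hom_ext _ _ }
          left_inv _ := CommaMorphism.ext (ha.hom_ext _ _) rfl
          right_inv _ := rfl }
      homEquiv_naturality_left_symm _ _ := CommaMorphism.ext (ha.hom_ext _ _) rfl
      homEquiv_naturality_right _ _ := rfl }

/-- The adjunction identifying morphisms `X ⟶ (Y, b, L Y ⟶ R b)` with morphisms `X.left ⟶ Y`. -/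
def fstAdjCommaInl (L : A ⥤ T) (R : B ⥤ T) {b : B} (hb : IsTerminal b)
    (hRb : IsTerminal (R.obj b)) : Comma.fst L R ⊣ commaInl L R hRb :=
  Adjunction.mkOfHomEquiv
    { homEquiv X _ :=
        { toFun f := { left := f, right := hb.from X.right, w := hRb.hom_ext _ _ }
          invFun g := g.left
          left_inv _ := rfl
          right_inv _ := CommaMorphism.ext rfl (hb.hom_ext _ _) }
      homEquiv_naturality_left_symm _ _ := rfl
      homEquiv_naturality_right _ _ := CommaMorphism.ext rfl (hb.hom_ext _ _) }

/-- The adjunction identifying morphisms `X ⟶ (R E, E, 𝟙)` with morphisms `X.right ⟶ E`. -/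
def sndAdjCommaGraph (R : B ⥤ T) : Comma.snd (𝟭 T) R ⊣ commaGraph R :=
  Adjunction.mkOfHomEquiv
    { homEquiv X _ :=
        { toFun f := { left := X.hom ≫ R.map f, right := f, w := Category.comp_id _ }
          invFun g := g.right
          left_inv _ := rfl
          right_inv g := CommaMorphism.ext (g.w.symm.trans (Category.comp_id _)) rfl }
      homEquiv_naturality_left_symm _ _ := rfl
      homEquiv_naturality_right f g := CommaMorphism.ext
        ((congrArg (_ ≫ ·) (R.map_comp f g)).trans (Category.assoc _ _ _).symm) rfl }

/-- Full faithfulness of `commaInl` at a terminal object, with preimages given by left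
components. -/
def fullyFaithfulCommaInl (L : A ⥤ T) (R : B ⥤ T) {b : B} (hb : IsTerminal b)
    (hRb : IsTerminal (R.obj b)) : (commaInl L R hRb).FullyFaithful where
  preimage f := f.left
  map_preimage _ := CommaMorphism.ext rfl (hb.hom_ext _ _)

lemma preservesMonomorphisms_comma_snd (L : A ⥤ T) (R : B ⥤ T) {a : A} (ha : IsInitial a)
    (hLa : IsInitial (L.obj a)) : (Comma.snd L R).PreservesMonomorphisms :=
  Functor.preservesMonomorphisms_of_adjunction (commaInrAdjSnd L R ha hLa)

lemma preservesInjectiveObjects_commaGraph [HasInitial T] (R : B ⥤ T) :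
    (commaGraph R).PreservesInjectiveObjects where
  injective_obj {E} hE :=
    have := preservesMonomorphisms_comma_snd (𝟭 T) R initialIsInitial initialIsInitial
    (sndAdjCommaGraph R).map_injective E hE

lemma injective_of_injective_commaInl_obj {L : A ⥤ T} {R : B ⥤ T} {b : B} (hb : IsTerminal b)
    (hRb : IsTerminal (R.obj b)) {Y : A} (hY : Injective ((commaInl L R hRb).obj Y)) :
    Injective Y :=
  have := (fullyFaithfulCommaInl L R hb hRb).full
  have := (fullyFaithfulCommaInl L R hb hRb).faithful
  (fstAdjCommaInl L R hb hRb).injective_of_map_injective Y hY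

lemma comma_epi_of_epi_left_of_epi_right {L : A ⥤ T} {R : B ⥤ T} {X Y : Comma L R} (f : X ⟶ Y)
    [Epi f.left] [Epi f.right] : Epi f where
  left_cancellation _ _ h := CommaMorphism.ext
    ((cancel_epi f.left).1 (congrArg CommaMorphism.left h))
    ((cancel_epi f.right).1 (congrArg CommaMorphism.right h))

lemma epi_fstAdjCommaInl_unit_app (L : A ⥤ T) (R : B ⥤ T) {b : B} (hb : IsZero b)
    (hRb : IsTerminal (R.obj b)) (X : Comma L R) :
    Epi ((fstAdjCommaInl L R hb.isTerminal hRb).unit.app X) :=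
  have : Epi ((fstAdjCommaInl L R hb.isTerminal hRb).unit.app X).left :=
    inferInstanceAs (Epi (𝟙 X.left))
  have : Epi ((fstAdjCommaInl L R hb.isTerminal hRb).unit.app X).right := hb.epi _
  comma_epi_of_epi_left_of_epi_right _

end CommaAdjunctions

theorem stmt_9_general {A₁ A₂ : Type*} [Category* A₁] [Category* A₂] [HasZeroObject A₁]
    [HasInitial A₂] (F : A₁ ⥤ A₂) [PreservesLimit (Functor.empty.{0} A₁) F]
    (hK : Hereditary (Comma (𝟭 A₂) F)) : F.PreservesInjectiveObjects where
  injective_obj {E} hE := by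
    obtain ⟨Z, hZ⟩ := HasZeroObject.zero (C := A₁)
    have hFZ : IsTerminal (F.obj Z) := hZ.isTerminal.isTerminalObj F Z
    have graph_injective : Injective ((commaGraph F).obj E) :=
      (preservesInjectiveObjects_commaGraph F).injective_obj hE
    have inl_injective : Injective ((commaInl (𝟭 A₂) F hFZ).obj (F.obj E)) :=
      hK _ (epi_fstAdjCommaInl_unit_app (𝟭 A₂) F hZ hFZ ((commaGraph F).obj E)) graph_injective
    exact injective_of_injective_commaInl_obj hZ.isTerminal hFZ inl_injective

theorem stmt_9 {A₁ : Type u₁} [Category.{v₁} A₁] [Abelian A₁] [EnoughInjectives A₁]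
    {A₂ : Type u₂} [Category.{v₂} A₂] [Abelian A₂] [EnoughInjectives A₂]
    (F : A₁ ⥤ A₂) [F.Additive] [PreservesFiniteLimits F]
    (hK : Hereditary (Comma (𝟭 A₂) F)) :
    ∀ E : A₁, Injective E → Injective (F.obj E) :=
  fun _ hE => (stmt_9_general F hK).injective_obj hE
end
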